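/- arXiv:2603.26319 — 2 statements merged into one kernel-verified Lean document; each statement's English description precedes it below -/
import Mathlib

section
/- (Uniform control of large spins under ξ⁺ boundary conditions.) Let G = (V,E), o, J (reasonable and ferromagnetic with function f, exponent r, constant c ∈ (0,1)), β ≥ 0, ρ and c₀ be as follows: G infinite connected with all degrees finite; J reasonable ferromagnetic; ρ a measure on ℝ with 0 < ∫ e^{a|u|²}dρ(u) < ∞ for all a > 0; and f(k^{−r}) ≥ c₀ √( log|B_{k+j}(o)| / log|B_j(o)| ) for all integers j, k ≥ 1. Let ξ⁺_x = √(log|B_{d_G(o,x)}(o)|). For finite Λ' ⊂ Λ ⊂ V define the event F_{Λ,Λ'} = { φ ∈ ℝ^Λ : |φ_x| ≤ ξ⁺_x for all x ∈ Λ ∖ Λ' }. Then ν^{ξ⁺}_{Λ,β,ρ,J}[F_{Λ,Λ'}^c] → 0 uniformly in Λ ⊇ Λ' as Λ' ↗ V; that is, for every ε > 0 there exists a finite Λ₀ ⊂ V such that for every finite Λ' ⊇ Λ₀ and every finite Λ ⊇ Λ', ν^{ξ⁺}_{Λ,β,ρ,J}[F_{Λ,Λ'}^c] < ε. -/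
open MeasureTheory
open scoped ENNReal Classical

/-- The Hamiltonian `-H^ξ_{Λ,J}` (already multiplied by `β`). -/
noncomputable def hamil {V : Type*} (J : V → V → ℝ) (β : ℝ) (Λ : Finset V)
    (ξ : V → ℝ) (φ : ↥Λ → ℝ) : ℝ :=
  β * ((1 / 2) * ∑ x : ↥Λ, ∑ y : ↥Λ,
      (if x.1 ≠ y.1 then J x.1 y.1 * φ x * φ y else 0)
    + ∑ x : ↥Λ, φ x * ∑' y : {y : V // y ∉ Λ}, J x.1 y.1 * ξ y.1)

/-- The finite-volume Gibbs measure `ν^ξ_{Λ,β,ρ,J}` on `ℝ^Λ`. -/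
noncomputable def gibbs {V : Type*} (J : V → V → ℝ) (β : ℝ) (ρ : Measure ℝ)
    (Λ : Finset V) (ξ : V → ℝ) : Measure (↥Λ → ℝ) :=
  (((Measure.pi fun _ : ↥Λ => ρ).withDensity
      fun φ => ENNReal.ofReal (Real.exp (hamil J β Λ ξ φ))) Set.univ)⁻¹ •
    (Measure.pi fun _ : ↥Λ => ρ).withDensity
      fun φ => ENNReal.ofReal (Real.exp (hamil J β Λ ξ φ))


lemma single_site (ρ : Measure ℝ)
    (hρ : ∀ a : ℝ, 0 < a →
      0 < ∫⁻ u, ENNReal.ofReal (Real.exp (a * u ^ 2)) ∂ρ ∧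
      ∫⁻ u, ENNReal.ofReal (Real.exp (a * u ^ 2)) ∂ρ < ⊤) (a b : ℝ) (ha : 0 < a) (hb : 0 < b) :
    ∃ C : ℝ, 0 ≤ C ∧ ∀ h R : ℝ,
      ∫⁻ u, ENNReal.ofReal (Real.exp (a * u ^ 2 + (u * h + R))) ∂ρ ≤
      ∫⁻ u, ENNReal.ofReal (Real.exp (C + b * h ^ 2 + (u * h + R))) ∂ρ := by
  have hρ0 : ρ ≠ 0 := by
    rintro rfl
    simpa using (hρ 1 one_pos).1
  set A := ∫⁻ u, ENNReal.ofReal (Real.exp ((a + 1 / (2 * b)) * u ^ 2)) ∂ρ with hA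
  set B := ∫⁻ u, ENNReal.ofReal (Real.exp (-(1 / (2 * b)) * u ^ 2)) ∂ρ with hB
  have hAt : A < ⊤ := (hρ _ (by positivity)).2
  have hB0 : 0 < B := by
    rw [hB, lintegral_pos_iff_support (by fun_prop)]
    have : (Function.support fun u : ℝ => ENNReal.ofReal (Real.exp (-(1 / (2 * b)) * u ^ 2))) = Set.univ := by
      ext u; simp [Real.exp_pos]
    rw [this]
    simpa [pos_iff_ne_zero] using hρ0
  have hBA : B ≤ A := by
    apply lintegral_mono
    intro u
    apply ENNReal.ofReal_le_ofReal
    apply Real.exp_le_exp.2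
    have : 0 ≤ 1 / (2 * b) := by positivity
    nlinarith [sq_nonneg u]
  have hBt : B < ⊤ := hBA.trans_lt hAt
  have hB0' : 0 < B.toReal := ENNReal.toReal_pos hB0.ne' hBt.ne
  have hA0' : 0 < A.toReal := ENNReal.toReal_pos (hB0.trans_le hBA).ne' hAt.ne
  have hBA' : B.toReal ≤ A.toReal := ENNReal.toReal_mono hAt.ne hBA
  refine ⟨Real.log (A.toReal / B.toReal), Real.log_nonneg ((one_le_div hB0').2 hBA'), fun h R => ?_⟩
  have key : ∀ u : ℝ, |u * h| ≤ (b / 2) * h ^ 2 + (1 / (2 * b)) * u ^ 2 := by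
    intro u
    have e : (b / 2) * h ^ 2 + (1 / (2 * b)) * u ^ 2 = (b ^ 2 * h ^ 2 + u ^ 2) / (2 * b) := by
      field_simp
    rw [e, le_div_iff₀ (by positivity)]
    rcases abs_cases (u * h) with ⟨h1, _⟩ | ⟨h1, _⟩ <;> rw [h1] <;>
      nlinarith [sq_nonneg (b * h - u), sq_nonneg (b * h + u)]
  calc _ ≤ ∫⁻ u, ENNReal.ofReal (Real.exp ((b / 2) * h ^ 2 + R)) *
            ENNReal.ofReal (Real.exp ((a + 1 / (2 * b)) * u ^ 2)) ∂ρ := by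
          apply lintegral_mono
          intro u
          dsimp only
          rw [← ENNReal.ofReal_mul (Real.exp_nonneg _), ← Real.exp_add]
          apply ENNReal.ofReal_le_ofReal
          apply Real.exp_le_exp.2
          linarith [(abs_le.1 (key u)).2]
    _ = ENNReal.ofReal (Real.exp ((b / 2) * h ^ 2 + R)) * A := by
          rw [lintegral_const_mul _ (by fun_prop)]
    _ = ENNReal.ofReal (Real.exp (Real.log (A.toReal / B.toReal) + (b / 2) * h ^ 2 + R)) * B := by
          rw [← ENNReal.ofReal_toReal hAt.ne, ← ENNReal.ofReal_toReal hBt.ne,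
            ← ENNReal.ofReal_mul (Real.exp_nonneg _), ← ENNReal.ofReal_mul (Real.exp_nonneg _),
            add_assoc (Real.log _), Real.exp_add (Real.log _),
            ENNReal.toReal_ofReal hA0'.le, ENNReal.toReal_ofReal hB0'.le,
            Real.exp_log (by positivity)]
          congr 1
          field_simp
    _ = ∫⁻ u, ENNReal.ofReal (Real.exp (Real.log (A.toReal / B.toReal) + (b / 2) * h ^ 2 + R)) *
            ENNReal.ofReal (Real.exp (-(1 / (2 * b)) * u ^ 2)) ∂ρ := by
          rw [lintegral_const_mul _ (by fun_prop)]
    _ ≤ _ := by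
          apply lintegral_mono
          intro u
          dsimp only
          rw [← ENNReal.ofReal_mul (Real.exp_nonneg _), ← Real.exp_add]
          apply ENNReal.ofReal_le_ofReal
          apply Real.exp_le_exp.2
          linarith [(abs_le.1 (key u)).1]

noncomputable def absH {ι : Type*} [Fintype ι] (K : ι → ι → ℝ) (g : ι → ℝ) (φ : ι → ℝ) : ℝ :=
  (1 / 2) * ∑ x, ∑ y, (if x ≠ y then K x y * φ x * φ y else 0) + ∑ x, φ x * g x

noncomputable def locF {ι : Type*} [Fintype ι] (K : ι → ι → ℝ) (g : ι → ℝ) (φ : ι → ℝ) (x : ι) : ℝ :=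
  ∑ y, (if x ≠ y then K x y * φ y else 0) + g x

lemma locF_update {ι : Type*} [Fintype ι] (K : ι → ι → ℝ) (g : ι → ℝ)
    (φ : ι → ℝ) (x : ι) (u : ℝ) : locF K g (Function.update φ x u) x = locF K g φ x := by
  unfold locF
  congr 1
  apply Finset.sum_congr rfl
  intro y _
  by_cases h : x = y
  · simp [h]
  · simp [h, Function.update_of_ne (Ne.symm h)]

lemma absH_update {ι : Type*} [Fintype ι] (K : ι → ι → ℝ) (hK : ∀ x y, K x y = K y x) (g : ι → ℝ)
    (φ : ι → ℝ) (x : ι) (u : ℝ) :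
    absH K g (Function.update φ x u) = u * locF K g φ x + absH K g (Function.update φ x 0) := by
  have e : ∀ v, Function.update φ x v = fun y => Function.update φ x 0 y + (if y = x then v else 0) := by
    intro v; ext y
    by_cases h : y = x
    · subst h; simp
    · simp [h]
  rw [← locF_update K g φ x 0, e u]
  set ψ := Function.update φ x 0 with hψ
  have hx : ψ x = 0 := by simp [hψ]
  unfold absH locF
  have e1 : ∀ z y, (if z ≠ y then K z y * (ψ z + (if z = x then u else 0)) * (ψ y + (if y = x then u else 0)) else 0)
     = (if z ≠ y then K z y * ψ z * ψ y else 0) + (if z = x then (if z ≠ y then u * (K z y * ψ y) else 0) else 0)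
       + (if y = x then (if z ≠ y then u * (K z y * ψ z) else 0) else 0) := by
    intro z y
    by_cases h1 : z = y
    · simp [h1]
    by_cases h2 : z = x
    · have : y ≠ x := fun h => h1 (h2.trans h.symm)
      have h4 : x ≠ y := Ne.symm this
      simp [h2, this, h4]; ring
    · by_cases h3 : y = x
      · simp [h2, h3]; ring
      · simp [h1, h2, h3]
  simp_rw [e1, Finset.sum_add_distrib]
  have e2 : ∑ z, ∑ y, (if z = x then (if z ≠ y then u * (K z y * ψ y) else 0) else 0)
      = u * ∑ y, (if x ≠ y then K x y * ψ y else 0) := by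
    rw [Finset.sum_eq_single x]
    · simp [Finset.mul_sum]
    · intro b _ hb; simp [hb]
    · simp
  have e3 : ∑ z, ∑ y, (if y = x then (if z ≠ y then u * (K z y * ψ z) else 0) else 0)
      = u * ∑ y, (if x ≠ y then K x y * ψ y else 0) := by
    rw [Finset.sum_comm, Finset.sum_eq_single x]
    · simp only [if_true, Finset.mul_sum]
      apply Finset.sum_congr rfl
      intro z _
      by_cases h : z = x
      · simp [h]
      · simp [h, Ne.symm h, hK z x]
    · intro b _ hb; simp [hb]
    · simp
  rw [e2, e3]
  simp_rw [add_mul, Finset.sum_add_distrib]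
  have e4 : ∑ z, (if z = x then u else 0) * g z = u * g x := by simp
  rw [e4]; ring

lemma measurable_absH {ι : Type*} [Fintype ι] (K : ι → ι → ℝ) (g : ι → ℝ) :
    Measurable (absH K g) := by
  unfold absH
  refine Measurable.add (Measurable.const_mul ?_ _) (by fun_prop)
  refine Finset.measurable_sum _ fun x _ => Finset.measurable_sum _ fun y _ => ?_
  split_ifs <;> fun_prop

lemma measurable_locF {ι : Type*} [Fintype ι] (K : ι → ι → ℝ) (g : ι → ℝ) (x : ι) :
    Measurable (fun φ => locF K g φ x) := by
  unfold locF
  refine Measurable.add ?_ (by fun_prop)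
  refine Finset.measurable_sum _ fun y _ => ?_
  split_ifs <;> fun_prop

lemma absH_le {ι : Type*} [Fintype ι] (K : ι → ι → ℝ) (g : ι → ℝ) :
    ∃ A B : ℝ, 0 ≤ A ∧ ∀ φ, absH K g φ ≤ A * ∑ x, φ x ^ 2 + B := by
  refine ⟨∑ x, ∑ y, |K x y| + 1, ∑ x, g x ^ 2, by positivity, fun φ => ?_⟩
  have hS : ∀ x, φ x ^ 2 ≤ ∑ x, φ x ^ 2 := fun x =>
    Finset.single_le_sum (f := fun x => φ x ^ 2) (fun i _ => sq_nonneg _) (Finset.mem_univ x)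
  have hS0 : 0 ≤ ∑ x, φ x ^ 2 := Finset.sum_nonneg fun i _ => sq_nonneg _
  set S := ∑ x, φ x ^ 2 with hSd
  have h1 : ∑ x, ∑ y, (if x ≠ y then K x y * φ x * φ y else 0) ≤ ∑ x, ∑ y, |K x y| * S := by
    refine Finset.sum_le_sum fun x _ => Finset.sum_le_sum fun y _ => ?_
    split_ifs
    · have : |φ x * φ y| ≤ S := by
        rw [abs_le]; constructor <;> nlinarith [hS x, hS y, sq_nonneg (φ x + φ y), sq_nonneg (φ x - φ y)]
      calc K x y * φ x * φ y ≤ |K x y * (φ x * φ y)| := by rw [mul_assoc]; exact le_abs_self _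
        _ = |K x y| * |φ x * φ y| := abs_mul _ _
        _ ≤ _ := by gcongr
    · positivity
  have h2 : ∑ x, φ x * g x ≤ S + ∑ x, g x ^ 2 := by
    rw [hSd, ← Finset.sum_add_distrib]
    refine Finset.sum_le_sum fun x _ => ?_
    nlinarith [sq_nonneg (φ x - g x), sq_nonneg (φ x), sq_nonneg (g x)]
  have h3 : ∑ x, ∑ y, |K x y| * S = (∑ x, ∑ y, |K x y|) * S := by
    simp_rw [Finset.sum_mul]
  have h4 : 0 ≤ (∑ x, ∑ y, |K x y|) * S := by positivity
  unfold absH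
  nlinarith

lemma exp_absH_fin {ι : Type*} [Fintype ι] (K : ι → ι → ℝ) (g : ι → ℝ) (ρ : Measure ℝ) [IsFiniteMeasure ρ]
    (hρ : ∀ a : ℝ, 0 < a →
      0 < ∫⁻ u, ENNReal.ofReal (Real.exp (a * u ^ 2)) ∂ρ ∧
      ∫⁻ u, ENNReal.ofReal (Real.exp (a * u ^ 2)) ∂ρ < ⊤) (a : ℝ) (ha : 0 < a) (x : ι) :
    ∫⁻ φ, ENNReal.ofReal (Real.exp (a * φ x ^ 2 + absH K g φ)) ∂(Measure.pi fun _ : ι => ρ) < ⊤ := by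
  obtain ⟨A, B, hA, hAB⟩ := absH_le K g
  have hint : Integrable (fun u : ℝ => Real.exp ((a + A) * u ^ 2)) ρ := by
    refine ⟨by fun_prop, ?_⟩
    rw [hasFiniteIntegral_iff_ofReal (by filter_upwards with u using (Real.exp_nonneg _))]
    exact (hρ _ (by positivity)).2
  have h2 : Integrable (fun φ : ι → ℝ => Real.exp B * ∏ i, Real.exp ((a + A) * φ i ^ 2)) (Measure.pi fun _ : ι => ρ) :=
    (Integrable.fintype_prod (f := fun _ u => Real.exp ((a + A) * u ^ 2)) (fun _ => hint)).const_mul _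
  refine lt_of_le_of_lt (lintegral_mono fun φ => ?_) h2.lintegral_lt_top
  apply ENNReal.ofReal_le_ofReal
  rw [← Real.exp_sum, ← Real.exp_add]
  apply Real.exp_le_exp.2
  have := hAB φ
  have hS : φ x ^ 2 ≤ ∑ x, φ x ^ 2 := 
    Finset.single_le_sum (f := fun x => φ x ^ 2) (fun i _ => sq_nonneg _) (Finset.mem_univ x)
  rw [← Finset.mul_sum]
  nlinarith

lemma holder_exp {α ι : Type*} [MeasurableSpace α] [Fintype ι] (μ : Measure α) [IsProbabilityMeasure μ]
    (X : ι → α → ℝ) (hX : ∀ i, Measurable (X i)) (p : ι → ℝ) (hp : ∀ i, 0 ≤ p i) (hp1 : ∑ i, p i ≤ 1)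
    (L : ι → ℝ) (hL : ∀ i, ∫⁻ a, ENNReal.ofReal (Real.exp (X i a)) ∂μ ≤ ENNReal.ofReal (Real.exp (L i))) :
    ∫⁻ a, ENNReal.ofReal (Real.exp (∑ i, p i * X i a)) ∂μ ≤ ENNReal.ofReal (Real.exp (∑ i, p i * L i)) := by
  have hh := ENNReal.lintegral_mul_prod_norm_pow_le (μ := μ) Finset.univ (g := fun _ => 1)
    (f := fun i a => ENNReal.ofReal (Real.exp (X i a))) (by fun_prop) (by intro i _; have := hX i; fun_prop)
    (1 - ∑ i, p i) (p := p) (by ring) (by linarith) (fun i _ => hp i)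
  have e : ∀ Y : ι → ℝ, ENNReal.ofReal (Real.exp (∑ i, p i * Y i)) =
      ∏ i, ENNReal.ofReal (Real.exp (Y i)) ^ p i := by
    intro Y
    rw [Real.exp_sum, ENNReal.ofReal_prod_of_nonneg (fun i _ => Real.exp_nonneg _)]
    refine Finset.prod_congr rfl fun i _ => ?_
    rw [ENNReal.ofReal_rpow_of_pos (Real.exp_pos _), ← Real.exp_mul, mul_comm]
  simp only [ENNReal.one_rpow, one_mul, lintegral_const, measure_univ] at hh
  simp_rw [e]
  refine hh.trans ?_
  refine Finset.prod_le_prod' fun i _ => ?_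
  exact ENNReal.rpow_le_rpow (hL i) (hp i)

noncomputable def absG {ι : Type*} [Fintype ι] (K : ι → ι → ℝ) (g : ι → ℝ) (ρ : Measure ℝ) :
    Measure (ι → ℝ) :=
  (((Measure.pi fun _ : ι => ρ).withDensity
      fun φ => ENNReal.ofReal (Real.exp (absH K g φ))) Set.univ)⁻¹ •
    (Measure.pi fun _ : ι => ρ).withDensity
      fun φ => ENNReal.ofReal (Real.exp (absH K g φ))

lemma rho_facts (ρ : Measure ℝ)
    (hρ : ∀ a : ℝ, 0 < a →
      0 < ∫⁻ u, ENNReal.ofReal (Real.exp (a * u ^ 2)) ∂ρ ∧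
      ∫⁻ u, ENNReal.ofReal (Real.exp (a * u ^ 2)) ∂ρ < ⊤) : ρ ≠ 0 ∧ IsFiniteMeasure ρ := by
  constructor
  · rintro rfl
    simpa using (hρ 1 one_pos).1
  · constructor
    refine lt_of_le_of_lt ?_ (hρ 1 one_pos).2
    rw [← lintegral_one]
    refine lintegral_mono fun u => ?_
    rw [← ENNReal.ofReal_one]
    apply ENNReal.ofReal_le_ofReal
    apply Real.one_le_exp
    positivity

lemma absG_prob {ι : Type*} [Fintype ι] [Nonempty ι] (K : ι → ι → ℝ) (g : ι → ℝ) (ρ : Measure ℝ)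
    (hρ : ∀ a : ℝ, 0 < a →
      0 < ∫⁻ u, ENNReal.ofReal (Real.exp (a * u ^ 2)) ∂ρ ∧
      ∫⁻ u, ENNReal.ofReal (Real.exp (a * u ^ 2)) ∂ρ < ⊤) : IsProbabilityMeasure (absG K g ρ) := by
  obtain ⟨h0, hfin⟩ := rho_facts ρ hρ
  have hm := measurable_absH K g
  constructor
  unfold absG
  rw [Measure.smul_apply, smul_eq_mul]
  apply ENNReal.inv_mul_cancel
  · rw [withDensity_apply _ MeasurableSet.univ, Measure.restrict_univ]
    apply ne_of_gt
    rw [lintegral_pos_iff_support (by fun_prop)]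
    have : (Function.support fun φ : ι → ℝ => ENNReal.ofReal (Real.exp (absH K g φ))) = Set.univ := by
      ext u; simp [Real.exp_pos]
    rw [this, Measure.pi_univ, pos_iff_ne_zero, Finset.prod_ne_zero_iff]
    simpa using h0
  · rw [withDensity_apply _ MeasurableSet.univ, Measure.restrict_univ]
    obtain ⟨x⟩ := (inferInstance : Nonempty ι)
    refine ne_of_lt (lt_of_le_of_lt (lintegral_mono fun φ => ?_) (exp_absH_fin K g ρ hρ 1 one_pos x))
    apply ENNReal.ofReal_le_ofReal
    apply Real.exp_le_exp.2
    nlinarith [sq_nonneg (φ x)]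

lemma absG_lint {ι : Type*} [Fintype ι] (K : ι → ι → ℝ) (g : ι → ℝ) (ρ : Measure ℝ)
    (X : (ι → ℝ) → ℝ) (hX : Measurable X) :
    ∫⁻ φ, ENNReal.ofReal (Real.exp (X φ)) ∂(absG K g ρ) = 
     (((Measure.pi fun _ : ι => ρ).withDensity
      fun φ => ENNReal.ofReal (Real.exp (absH K g φ))) Set.univ)⁻¹ *
      ∫⁻ φ, ENNReal.ofReal (Real.exp (X φ + absH K g φ)) ∂(Measure.pi fun _ : ι => ρ) := by
  have hm := measurable_absH K g
  unfold absG
  rw [lintegral_smul_measure, smul_eq_mul, lintegral_withDensity_eq_lintegral_mul _ (by fun_prop) (by fun_prop)]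
  congr 1
  refine lintegral_congr fun φ => ?_
  rw [Pi.mul_apply, ← ENNReal.ofReal_mul (Real.exp_nonneg _), ← Real.exp_add, add_comm]

theorem abs_main.{u} (ρ : Measure ℝ)
    (hρ : ∀ a : ℝ, 0 < a →
      0 < ∫⁻ u, ENNReal.ofReal (Real.exp (a * u ^ 2)) ∂ρ ∧
      ∫⁻ u, ENNReal.ofReal (Real.exp (a * u ^ 2)) ∂ρ < ⊤) (D : ℝ) (hD : 0 ≤ D) :
    ∃ C : ℝ, ∀ (ι : Type u) [Fintype ι] (K : ι → ι → ℝ) (_ : ∀ x y, K x y = K y x) (g ζ : ι → ℝ)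
      (q : ι → ι → ℝ) (_ : ∀ x y, 0 ≤ q x y) (_ : ∀ x, ∑ y, q x y ≤ D)
      (_ : ∀ x, ∑ y, q x y * ζ y ^ 2 ≤ D * ζ x ^ 2)
      (_ : ∀ φ x, locF K g φ x ^ 2 ≤ ∑ y, q x y * φ y ^ 2 + D * ζ x ^ 2) (x : ι),
      ∫⁻ φ, ENNReal.ofReal (Real.exp (4 * φ x ^ 2)) ∂(absG K g ρ) ≤
        ENNReal.ofReal (Real.exp (C + ζ x ^ 2)) := by
  obtain ⟨b, hb, hbD⟩ : ∃ b : ℝ, 0 < b ∧ b * D ≤ 1 / 2 := by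
    refine ⟨1 / (2 * (D + 1)), by positivity, ?_⟩
    rw [div_mul_eq_mul_div, div_le_iff₀ (by positivity)]; linarith
  obtain ⟨C, hC, hsite⟩ := single_site ρ hρ 4 b (by norm_num) hb
  refine ⟨2 * C, fun ι _ K hK g ζ q hq hqD hqζ hloc x₀ => ?_⟩
  obtain ⟨h0, hfin⟩ := rho_facts ρ hρ
  have : Nonempty ι := ⟨x₀⟩
  have hP := absG_prob K g ρ hρ
  have hm := measurable_absH K g
  -- one step
  have step1 : ∀ x, ∫⁻ φ, ENNReal.ofReal (Real.exp (4 * φ x ^ 2)) ∂(absG K g ρ) ≤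
      ∫⁻ φ, ENNReal.ofReal (Real.exp (C + b * locF K g φ x ^ 2)) ∂(absG K g ρ) := by
    intro x
    have hm2 := measurable_locF K g x
    rw [absG_lint _ _ _ _ (by fun_prop), absG_lint _ _ _ _ (by fun_prop)]
    refine mul_le_mul' le_rfl ?_
    refine lintegral_le_of_lmarginal_le (μ := fun _ : ι => ρ) {x} ?_ ?_ ?_
    · fun_prop
    · fun_prop
    rw [lmarginal_singleton, lmarginal_singleton]
    intro φ
    simp only [Function.update_self, locF_update]
    have h := hsite (locF K g φ x) (absH K g (Function.update φ x 0))
    simp only [← absH_update K hK g φ x] at h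
    exact h
  have step2 : ∀ L : ι → ℝ, (∀ y, ∫⁻ φ, ENNReal.ofReal (Real.exp (4 * φ y ^ 2)) ∂(absG K g ρ) ≤
      ENNReal.ofReal (Real.exp (L y))) → ∀ x, 
      ∫⁻ φ, ENNReal.ofReal (Real.exp (4 * φ x ^ 2)) ∂(absG K g ρ) ≤
      ENNReal.ofReal (Real.exp (C + b * D * ζ x ^ 2 + ∑ y, (b * q x y / 4) * L y)) := by
    intro L hL x
    refine (step1 x).trans ?_
    have hh := holder_exp (absG K g ρ) (fun y φ => 4 * φ y ^ 2) (by intro i; fun_prop)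
      (fun y => b * q x y / 4) (fun y => by have := hq x y; positivity) 
      (by rw [← Finset.sum_div, ← Finset.mul_sum]; nlinarith [hqD x]) L hL
    rw [Real.exp_add, ENNReal.ofReal_mul (Real.exp_nonneg _)]
    refine le_trans ?_ (mul_le_mul_right hh _)
    rw [← lintegral_const_mul _ (by fun_prop)]
    refine lintegral_mono fun φ => ?_
    dsimp only
    rw [← ENNReal.ofReal_mul (Real.exp_nonneg _), ← Real.exp_add]
    apply ENNReal.ofReal_le_ofReal
    apply Real.exp_le_exp.2
    have := mul_le_mul_of_nonneg_left (hloc φ x) hb.le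
    have e : ∑ y, b * q x y / 4 * (4 * φ y ^ 2) = b * ∑ y, q x y * φ y ^ 2 := by
      rw [Finset.mul_sum]; exact Finset.sum_congr rfl fun y _ => by ring
    rw [e]; linarith
  -- the logarithms
  set E : ι → ℝ≥0∞ := fun x => ∫⁻ φ, ENNReal.ofReal (Real.exp (4 * φ x ^ 2)) ∂(absG K g ρ) with hE
  have hEt : ∀ x, E x ≠ ⊤ := by
    intro x
    rw [hE]
    dsimp only
    rw [absG_lint _ _ _ _ (by fun_prop)]
    refine ENNReal.mul_ne_top ?_ (exp_absH_fin K g ρ hρ 4 (by norm_num) x).ne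
    intro h
    have := hP.measure_univ
    unfold absG at this
    rw [Measure.smul_apply, smul_eq_mul, h] at this
    rw [ENNReal.inv_eq_top] at h
    rw [h] at this
    simp at this
  have hE1 : ∀ x, 1 ≤ E x := by
    intro x
    rw [← hP.measure_univ, ← lintegral_one]
    refine lintegral_mono fun u => ?_
    rw [← ENNReal.ofReal_one]
    apply ENNReal.ofReal_le_ofReal
    apply Real.one_le_exp
    positivity
  have hE0 : ∀ x, 0 < (E x).toReal := fun x =>
    ENNReal.toReal_pos (zero_lt_one.trans_le (hE1 x)).ne' (hEt x)
  set L : ι → ℝ := fun x => Real.log (E x).toReal with hL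
  have hEL : ∀ x, E x = ENNReal.ofReal (Real.exp (L x)) := by
    intro x
    rw [hL]; dsimp only; rw [Real.exp_log (hE0 x), ENNReal.ofReal_toReal (hEt x)]
  obtain ⟨xm, -, hxm⟩ := Finset.exists_max_image Finset.univ (fun x => L x - ζ x ^ 2) ⟨x₀, Finset.mem_univ _⟩
  set s := max (L xm - ζ xm ^ 2) 0 with hs
  have hs0 : 0 ≤ s := le_max_right _ _
  have hLs : ∀ y, L y ≤ s + ζ y ^ 2 := by
    intro y
    have := hxm y (Finset.mem_univ _)
    have := le_max_left (L xm - ζ xm ^ 2) 0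
    linarith
  have hfix : L xm ≤ C + b * D * ζ xm ^ 2 + ∑ y, (b * q xm y / 4) * (s + ζ y ^ 2) := by
    have := step2 (fun y => s + ζ y ^ 2) (fun y => by
      change E y ≤ _
      rw [hEL y]
      exact ENNReal.ofReal_le_ofReal (Real.exp_le_exp.2 (hLs y))) xm
    change E xm ≤ _ at this
    rw [hEL xm, ENNReal.ofReal_le_ofReal_iff (Real.exp_nonneg _), Real.exp_le_exp] at this
    exact this
  have e : ∑ y, (b * q xm y / 4) * (s + ζ y ^ 2) = b / 4 * s * ∑ y, q xm y + b / 4 * ∑ y, q xm y * ζ y ^ 2 := by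
    rw [Finset.mul_sum, Finset.mul_sum, ← Finset.sum_add_distrib]
    exact Finset.sum_congr rfl fun y _ => by ring
  rw [e] at hfix
  have h1 : b / 4 * s * ∑ y, q xm y ≤ s / 8 := by
    calc _ ≤ b / 4 * s * D := by gcongr; exact hqD xm
      _ ≤ _ := by nlinarith
  have h2 : b / 4 * ∑ y, q xm y * ζ y ^ 2 ≤ 1 / 8 * ζ xm ^ 2 := by
    calc _ ≤ b / 4 * (D * ζ xm ^ 2) := by gcongr; exact hqζ xm
      _ ≤ _ := by nlinarith [sq_nonneg (ζ xm)]
  have h3 : b * D * ζ xm ^ 2 ≤ 1 / 2 * ζ xm ^ 2 := by gcongr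
  have hs2 : s ≤ 2 * C := by
    rcases max_cases (L xm - ζ xm ^ 2) 0 with ⟨h, _⟩ | ⟨h, _⟩
    · rw [← hs] at h
      nlinarith [sq_nonneg (ζ xm)]
    · rw [← hs] at h; linarith
  change E x₀ ≤ _
  rw [hEL x₀]
  apply ENNReal.ofReal_le_ofReal
  apply Real.exp_le_exp.2
  linarith [hLs x₀]

lemma ball_finite {V : Type*} (G : SimpleGraph V) (hconn : G.Connected)
    [∀ x : V, Fintype (G.neighborSet x)] (o : V) (n : ℕ) : {y : V | G.dist o y ≤ n}.Finite := by
  have h : ∀ (m : ℕ) (x : V), {y : V | ∃ p : G.Walk x y, p.length = m}.Finite := by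
    intro m
    induction m with
    | zero =>
      intro x
      refine (Set.finite_singleton x).subset ?_
      rintro y ⟨p, hp⟩
      exact (SimpleGraph.Walk.eq_of_length_eq_zero hp).symm
    | succ m ih =>
      intro x
      refine ((Set.toFinite (G.neighborSet x)).biUnion (fun z _ => ih z)).subset ?_
      rintro y ⟨p, hp⟩
      cases p with
      | nil => simp at hp
      | cons hadj p =>
        simp only [SimpleGraph.Walk.length_cons, add_left_inj] at hp
        exact Set.mem_biUnion hadj ⟨p, hp⟩
  refine ((Set.finite_Iic n).biUnion (fun m _ => h m o)).subset ?_
  intro y hy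
  obtain ⟨p, hp⟩ := hconn.exists_walk_length_eq_dist o y
  exact Set.mem_biUnion (show G.dist o y ∈ Set.Iic n from hy) ⟨p, hp⟩

lemma ball_two {V : Type*} (G : SimpleGraph V) (hconn : G.Connected) [Infinite V]
    [∀ x : V, Fintype (G.neighborSet x)] (o : V) (n : ℕ) (hn : 1 ≤ n) :
    2 ≤ {y : V | G.dist o y ≤ n}.ncard := by
  obtain ⟨y, hy⟩ : ∃ y, G.Adj o y := by
    obtain ⟨z, hz⟩ := exists_ne o
    obtain ⟨p⟩ := hconn.preconnected o z
    cases p with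
    | nil => exact absurd rfl hz
    | cons h p => exact ⟨_, h⟩
  rw [← Set.ncard_pair hy.ne]
  refine Set.ncard_le_ncard ?_ (ball_finite G hconn o n)
  rintro z (rfl | rfl)
  · simp
  · have := SimpleGraph.dist_eq_one_iff_adj.2 hy
    simp [this, hn]

lemma ball_summable {V : Type*} (G : SimpleGraph V) (hconn : G.Connected)
    [∀ x : V, Fintype (G.neighborSet x)] (o : V) :
    Summable (fun x : V => (({y : V | G.dist o y ≤ G.dist o x}.ncard : ℝ) ^ 3)⁻¹) := by
  have hs : Summable (fun n : ℕ => (((n + 1 : ℕ) : ℝ) ^ 3)⁻¹) :=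
    (summable_nat_add_iff 1).2 (Real.summable_nat_pow_inv.2 (by norm_num : 1 < 3))
  refine summable_of_sum_le (c := ∑' n : ℕ, (((n + 1 : ℕ) : ℝ) ^ 3)⁻¹) (fun x => by positivity) ?_
  intro T
  refine le_trans ?_ (hs.sum_le_tsum (Finset.range T.card) (fun i _ => by positivity))
  induction T using Finset.induction_on_max_value (fun x => G.dist o x) with
  | empty => simp
  | insert a s has hmax ih =>
    rw [Finset.sum_insert has, Finset.card_insert_of_notMem has, Finset.sum_range_succ, add_comm]
    refine add_le_add ih ?_
    gcongr
    have : (insert a s).card ≤ {y : V | G.dist o y ≤ G.dist o a}.ncard := by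
      rw [← Set.ncard_coe_finset]
      refine Set.ncard_le_ncard ?_ (ball_finite G hconn o _)
      intro z hz
      rcases Finset.mem_insert.1 (Finset.mem_coe.1 hz) with rfl | h
      · simp
      · exact hmax z h
    rwa [Finset.card_insert_of_notMem has] at this

/-- Lemma `maximal b.c lemma`: uniform control of large spins under
`ξ⁺` boundary conditions. With `G, o, J` reasonable ferromagnetic, `β ≥ 0`, `ρ`
having all Gaussian moments, and the ball-growth condition on `f`, the
`ν^{ξ⁺}_{Λ,β,ρ,J}`-probability of the complement of
`F_{Λ,Λ'} = {|φ_x| ≤ ξ⁺_x ∀ x ∈ Λ∖Λ'}` tends to `0` uniformly in `Λ ⊇ Λ'`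
as `Λ' ↗ V`. -/
theorem stmt14 {V : Type*} [Countable V] (G : SimpleGraph V) [Infinite V]
    (hconn : G.Connected) [∀ x : V, Fintype (G.neighborSet x)] (o : V)
    (J : V → V → ℝ) (f : ℝ → ℝ) (δf Mf r c : ℝ)
    (hδf : 0 < δf) (hMf : 0 < Mf) (hr : 0 < r) (hc : 0 < c) (hc1 : c < 1)
    (hJsymm : ∀ x y, J x y = J y x)
    (hferro : ∀ x y, 0 ≤ J x y)
    (hf1 : ∀ t, 1 ≤ f t)
    (hflog : ∀ t : ℝ, t ≠ 0 → |t| < δf → (Real.log (|t|⁻¹)) ^ ((1 : ℝ) / 2) ≤ f t)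
    (hJsum : ∀ x, Summable fun y => |J x y| * f (J x y))
    (hJbound : ∀ x, ∑' y, |J x y| * f (J x y) ≤ Mf)
    (hJconn : ∀ x y : V, ∃ (m : ℕ) (w : ℕ → V),
      (∀ i < m, J (w i) (w (i + 1)) ≠ 0) ∧ w 0 = x ∧ w m = y)
    (hJdist : ∀ x y : V, x ≠ y → |J x y| ≤ (G.dist x y : ℝ) ^ (-r))
    (hfeven : ∀ t, f (-t) = f t)
    (hfdec : AntitoneOn f (Set.Ioi 0))
    (hfc : ∀ t : ℝ, 0 ≤ t → c * f t ≤ f ((2 : ℝ) ^ r * t))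
    (β : ℝ) (hβ : 0 ≤ β) (ρ : Measure ℝ)
    (hρ : ∀ a : ℝ, 0 < a →
      0 < ∫⁻ u, ENNReal.ofReal (Real.exp (a * u ^ 2)) ∂ρ ∧
      ∫⁻ u, ENNReal.ofReal (Real.exp (a * u ^ 2)) ∂ρ < ⊤)
    (c₀ : ℝ) (hc₀ : 0 < c₀)
    (hball : ∀ j k : ℕ, 1 ≤ j → 1 ≤ k →
      c₀ * Real.sqrt (Real.log (({y : V | G.dist o y ≤ k + j}).ncard : ℝ) /
        Real.log (({y : V | G.dist o y ≤ j}).ncard : ℝ)) ≤ f ((k : ℝ) ^ (-r))) :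
    ∀ ε : ℝ, 0 < ε → ∃ Λ₀ : Finset V, ∀ (Λ' Λ : Finset V), Λ₀ ⊆ Λ' → Λ' ⊆ Λ →
      gibbs J β ρ Λ
          (fun x => Real.sqrt (Real.log (({y : V | G.dist o y ≤ G.dist o x}).ncard : ℝ)))
          {φ : ↥Λ → ℝ | ∃ x : ↥Λ, x.1 ∉ Λ' ∧
            Real.sqrt (Real.log (({y : V | G.dist o y ≤ G.dist o x.1}).ncard : ℝ)) <
              |φ x|} < ENNReal.ofReal ε := by
  intro ε hε
  -- balls
  set B : ℕ → ℕ := fun n => {y : V | G.dist o y ≤ n}.ncard with hB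
  set X : ℕ → ℝ := fun n => Real.sqrt (Real.log (B n : ℝ)) with hX
  have hBfin := fun n => ball_finite G hconn o n
  have hB2 : ∀ n, 1 ≤ n → 2 ≤ B n := fun n hn => ball_two G hconn o n hn
  have hB1 : ∀ n, 1 ≤ B n := by
    intro n
    rw [hB]
    refine Nat.one_le_iff_ne_zero.2 (Set.ncard_ne_zero_of_mem (a := o) ?_ (hBfin n))
    simp
  have hBmono : ∀ m n, m ≤ n → B m ≤ B n := fun m n h =>
    Set.ncard_le_ncard (fun y hy => le_trans hy h) (hBfin n)
  have hXmono : ∀ m n, m ≤ n → X m ≤ X n := by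
    intro m n h
    apply Real.sqrt_le_sqrt
    apply Real.log_le_log
    · exact_mod_cast hB1 m
    · exact_mod_cast hBmono m n h
  have hXsq : ∀ n, X n ^ 2 = Real.log (B n) := by
    intro n
    apply Real.sq_sqrt
    apply Real.log_nonneg
    exact_mod_cast hB1 n
  have hX0 : ∀ n, 0 ≤ X n := fun n => Real.sqrt_nonneg _
  set ζ : V → ℝ := fun x => X (max (G.dist o x) 1) with hζ
  have hζ0 : ∀ x, 0 ≤ ζ x := fun x => hX0 _
  have hf0 : ∀ t, 0 < f t := fun t => zero_lt_one.trans_le (hf1 t)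
  have hball' : ∀ j k : ℕ, 1 ≤ j → 1 ≤ k → X (k + j) ≤ f ((k : ℝ) ^ (-r)) / c₀ * X j := by
    intro j k hj hk
    have h := hball j k hj hk
    have hlog : 0 < Real.log (B j : ℝ) := by
      apply Real.log_pos
      have := hB2 j hj
      exact_mod_cast (by omega : 1 < B j)
    have hXj : 0 < X j := Real.sqrt_pos.2 hlog
    rw [Real.sqrt_div' _ hlog.le] at h
    change c₀ * (X (k + j) / X j) ≤ _ at h
    rw [div_mul_eq_mul_div, le_div_iff₀ hc₀]
    rw [← mul_div_assoc, div_le_iff₀ hXj] at h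
    linarith
  have hcmp : ∀ x y, x ≠ y → J x y * ζ y ≤ |J x y| * f (J x y) * (ζ x / c₀) := by
    intro x y hxy
    rw [abs_of_nonneg (hferro x y)]
    rcases (hferro x y).eq_or_lt with h | h
    · simp [← h]
    rw [mul_assoc]
    refine mul_le_mul_of_nonneg_left ?_ h.le
    have hk : 1 ≤ G.dist x y := (hconn.pos_dist_of_ne hxy)
    have h1 : ζ y ≤ X (G.dist x y + max (G.dist o x) 1) := by
      apply hXmono
      have := hconn.dist_triangle (u := o) (v := x) (w := y)
      omega
    refine (h1.trans (hball' _ _ (le_max_right _ _) hk)).trans ?_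
    have h2 : f ((G.dist x y : ℝ) ^ (-r)) ≤ f (J x y) := by
      apply hfdec
      · exact h
      · exact Real.rpow_pos_of_pos (by exact_mod_cast hk) _
      · exact (le_abs_self _).trans (hJdist x y hxy)
    rw [div_mul_eq_mul_div, mul_div_assoc]
    exact mul_le_mul_of_nonneg_right h2 (div_nonneg (hζ0 x) hc₀.le)
  have hJf0 : ∀ x y, 0 ≤ |J x y| * f (J x y) := fun x y => mul_nonneg (abs_nonneg _) (hf0 _).le
  have hfinsum : ∀ (Λ : Finset V) (x : V), ∑ y : ↥Λ, |J x y| * f (J x y) ≤ Mf := by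
    intro Λ x
    rw [Finset.sum_coe_sort Λ (fun y => |J x y| * f (J x y))]
    exact ((hJsum x).sum_le_tsum Λ (fun y _ => hJf0 x y)).trans (hJbound x)
  set ξ : V → ℝ := fun x => X (G.dist o x) with hξ
  have hξ0 : ∀ x, 0 ≤ ξ x := fun x => hX0 _
  have hξζ : ∀ x, ξ x ≤ ζ x := fun x => hXmono _ _ (le_max_left _ _)
  have hext : ∀ (Λ : Finset V) (x : ↥Λ), 0 ≤ ∑' y : {y : V // y ∉ Λ}, J x.1 y.1 * ξ y.1 ∧
      ∑' y : {y : V // y ∉ Λ}, J x.1 y.1 * ξ y.1 ≤ Mf * (ζ x.1 / c₀) := by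
    intro Λ x
    refine ⟨tsum_nonneg fun y => mul_nonneg (hferro _ _) (hξ0 _), ?_⟩
    have hs1 : Summable (fun y => |J x.1 y| * f (J x.1 y) * (ζ x.1 / c₀)) := (hJsum x.1).mul_right _
    have hinj : Function.Injective (Subtype.val : {y : V // y ∉ Λ} → V) := Subtype.val_injective
    have hs2 := hs1.comp_injective hinj
    have hle : ∀ y : {y : V // y ∉ Λ}, J x.1 y.1 * ξ y.1 ≤ |J x.1 y.1| * f (J x.1 y.1) * (ζ x.1 / c₀) := by
      intro y
      refine le_trans ?_ (hcmp x.1 y.1 (fun h => y.2 (h ▸ x.2)))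
      exact mul_le_mul_of_nonneg_left (hξζ _) (hferro _ _)
    have hn : ∀ y, 0 ≤ |J x.1 y| * f (J x.1 y) * (ζ x.1 / c₀) := fun y =>
      mul_nonneg (hJf0 _ _) (div_nonneg (hζ0 _) hc₀.le)
    calc _ ≤ ∑' y : {y : V // y ∉ Λ}, |J x.1 y.1| * f (J x.1 y.1) * (ζ x.1 / c₀) :=
          (Summable.of_nonneg_of_le (fun y => mul_nonneg (hferro _ _) (hξ0 _)) hle hs2).tsum_le_tsum hle hs2
      _ ≤ ∑' y, |J x.1 y| * f (J x.1 y) * (ζ x.1 / c₀) := tsum_comp_le_tsum_of_inj hs1 hn hinj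
      _ = (∑' y, |J x.1 y| * f (J x.1 y)) * (ζ x.1 / c₀) := tsum_mul_right
      _ ≤ _ := mul_le_mul_of_nonneg_right (hJbound _) (div_nonneg (hζ0 _) hc₀.le)
  set D : ℝ := 2 * β ^ 2 * Mf ^ 2 * (1 + 1 / c₀ ^ 2) with hD
  have hD1 : 2 * β ^ 2 * Mf ^ 2 ≤ D := by
    rw [hD]; apply le_mul_of_one_le_right (by positivity)
    have : 0 ≤ 1 / c₀ ^ 2 := by positivity
    linarith
  have hD2 : 2 * β ^ 2 * Mf ^ 2 * (1 / c₀ ^ 2) ≤ D := by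
    rw [hD]; apply mul_le_mul_of_nonneg_left _ (by positivity); linarith
  obtain ⟨C, hC⟩ := abs_main ρ hρ D (by positivity)
  -- exponential moments
  have hmom : ∀ (Λ : Finset V) (x : ↥Λ),
      ∫⁻ φ, ENNReal.ofReal (Real.exp (4 * φ x ^ 2)) ∂(gibbs J β ρ Λ ξ) ≤
        ENNReal.ofReal (Real.exp (C + ζ x ^ 2)) := by
    intro Λ x
    have hH : hamil J β Λ ξ = absH (fun x y : ↥Λ => β * J x.1 y.1)
        (fun x : ↥Λ => β * ∑' y : {y : V // y ∉ Λ}, J x.1 y.1 * ξ y.1) := by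
      ext φ
      unfold hamil absH
      rw [mul_add, Finset.mul_sum, Finset.mul_sum, Finset.mul_sum, Finset.mul_sum]
      congr 1
      · refine Finset.sum_congr rfl fun x _ => ?_
        rw [Finset.mul_sum, Finset.mul_sum, Finset.mul_sum]
        refine Finset.sum_congr rfl fun y _ => ?_
        by_cases h : x = y
        · simp [h]
        · have h' : x.1 ≠ y.1 := fun e => h (Subtype.ext e)
          rw [if_pos h', if_pos h]; ring
      · refine Finset.sum_congr rfl fun x _ => ?_
        ring
    have hG : gibbs J β ρ Λ ξ = absG (fun x y : ↥Λ => β * J x.1 y.1)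
        (fun x : ↥Λ => β * ∑' y : {y : V // y ∉ Λ}, J x.1 y.1 * ξ y.1) ρ := by
      unfold gibbs absG
      rw [hH]
    rw [hG]
    refine hC ↥Λ _ (fun x y => by rw [hJsymm]) _ (fun x => ζ x.1)
      (fun x y => if x ≠ y then 2 * β ^ 2 * Mf * (|J x.1 y.1| / f (J x.1 y.1)) else 0) ?_ ?_ ?_ ?_ x
    · intro x y
      have := (hf0 (J x.1 y.1)).le
      split_ifs <;> positivity
    · intro x
      refine le_trans ?_ hD1
      calc _ ≤ ∑ y : ↥Λ, 2 * β ^ 2 * Mf * (|J x.1 y.1| * f (J x.1 y.1)) := by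
            refine Finset.sum_le_sum fun y _ => ?_
            have h0 := hJf0 x.1 y.1
            split_ifs
            · gcongr
              rw [div_le_iff₀ (hf0 _), mul_assoc]
              apply le_mul_of_one_le_right (abs_nonneg _)
              nlinarith [hf1 (J x.1 y.1)]
            · positivity
        _ = 2 * β ^ 2 * Mf * ∑ y : ↥Λ, (|J x.1 y.1| * f (J x.1 y.1)) := by rw [Finset.mul_sum]
        _ ≤ 2 * β ^ 2 * Mf * Mf := by gcongr; exact hfinsum Λ x.1
        _ = _ := by ring
    · intro x
      refine le_trans ?_ (mul_le_mul_of_nonneg_right hD2 (sq_nonneg _))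
      calc _ ≤ ∑ y : ↥Λ, 2 * β ^ 2 * Mf * (ζ x.1 / c₀) ^ 2 * (|J x.1 y.1| * f (J x.1 y.1)) := by
            refine Finset.sum_le_sum fun y _ => ?_
            have h0 := hJf0 x.1 y.1
            split_ifs with hxy
            · have h1 := hcmp x.1 y.1 (fun e => hxy (Subtype.ext e))
              have hfp := hf0 (J x.1 y.1)
              rw [abs_of_nonneg (hferro x.1 y.1)] at h1 h0 ⊢
              rcases (hferro x.1 y.1).eq_or_lt with h | h
              · simp [← h]
              have h2 : ζ y.1 ≤ f (J x.1 y.1) * (ζ x.1 / c₀) := by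
                rw [mul_assoc] at h1
                exact le_of_mul_le_mul_left h1 h
              have h3 : ζ y.1 ^ 2 ≤ (f (J x.1 y.1) * (ζ x.1 / c₀)) ^ 2 :=
                pow_le_pow_left₀ (hζ0 _) h2 2
              calc _ ≤ 2 * β ^ 2 * Mf * (J x.1 y.1 / f (J x.1 y.1)) * (f (J x.1 y.1) * (ζ x.1 / c₀)) ^ 2 :=
                    mul_le_mul_of_nonneg_left h3 (by positivity)
                _ = _ := by field_simp
            · rw [zero_mul]; positivity
        _ = 2 * β ^ 2 * Mf * (ζ x.1 / c₀) ^ 2 * ∑ y : ↥Λ, (|J x.1 y.1| * f (J x.1 y.1)) := by rw [Finset.mul_sum]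
        _ ≤ 2 * β ^ 2 * Mf * (ζ x.1 / c₀) ^ 2 * Mf := by gcongr; exact hfinsum Λ x.1
        _ = _ := by field_simp
    · intro φ x
      have hcs : (∑ y : ↥Λ, (if x ≠ y then J x.1 y.1 * φ y else 0)) ^ 2 ≤
          (∑ y : ↥Λ, |J x.1 y.1| * f (J x.1 y.1)) *
          ∑ y : ↥Λ, (if x ≠ y then |J x.1 y.1| / f (J x.1 y.1) * φ y ^ 2 else 0) := by
        apply Finset.sum_sq_le_sum_mul_sum_of_sq_le_mul
        · intro y _; exact hJf0 _ _
        · intro y _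
          have := hf0 (J x.1 y.1)
          split_ifs <;> positivity
        · intro y _
          have := hf0 (J x.1 y.1)
          split_ifs
          · rw [mul_pow, ← sq_abs (J x.1 y.1)]
            apply le_of_eq; field_simp
          · simp
      have hcs2 : (∑ y : ↥Λ, |J x.1 y.1| * f (J x.1 y.1)) *
          ∑ y : ↥Λ, (if x ≠ y then |J x.1 y.1| / f (J x.1 y.1) * φ y ^ 2 else 0) ≤
          Mf * ∑ y : ↥Λ, (if x ≠ y then |J x.1 y.1| / f (J x.1 y.1) * φ y ^ 2 else 0) := by
        apply mul_le_mul_of_nonneg_right (hfinsum Λ x.1)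
        refine Finset.sum_nonneg fun y _ => ?_
        have := hf0 (J x.1 y.1)
        split_ifs <;> positivity
      obtain ⟨hg0, hg1⟩ := hext Λ x
      have e1 : locF (fun x y : ↥Λ => β * J x.1 y.1)
          (fun x : ↥Λ => β * ∑' y : {y : V // y ∉ Λ}, J x.1 y.1 * ξ y.1) φ x =
          β * ∑ y : ↥Λ, (if x ≠ y then J x.1 y.1 * φ y else 0) +
          β * ∑' y : {y : V // y ∉ Λ}, J x.1 y.1 * ξ y.1 := by
        unfold locF
        rw [Finset.mul_sum]
        congr 1
        refine Finset.sum_congr rfl fun y _ => ?_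
        by_cases h : x = y
        · simp [h]
        · rw [if_pos h, if_pos h]; ring
      have e2 : ∑ y : ↥Λ, (if x ≠ y then 2 * β ^ 2 * Mf * (|J x.1 y.1| / f (J x.1 y.1)) else 0) * φ y ^ 2 =
          2 * β ^ 2 * (Mf * ∑ y : ↥Λ, (if x ≠ y then |J x.1 y.1| / f (J x.1 y.1) * φ y ^ 2 else 0)) := by
        rw [Finset.mul_sum, Finset.mul_sum]
        refine Finset.sum_congr rfl fun y _ => ?_
        split_ifs <;> ring
      rw [e1, e2]
      set S := ∑ y : ↥Λ, (if x ≠ y then J x.1 y.1 * φ y else 0)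
      set g := ∑' y : {y : V // y ∉ Λ}, J x.1 y.1 * ξ y.1
      have hgsq : g ^ 2 ≤ (Mf * (ζ x.1 / c₀)) ^ 2 := pow_le_pow_left₀ hg0 hg1 2
      have hS : S ^ 2 ≤ _ := hcs.trans hcs2
      calc (β * S + β * g) ^ 2 ≤ 2 * β ^ 2 * S ^ 2 + 2 * β ^ 2 * g ^ 2 := by
            nlinarith [sq_nonneg (β * S - β * g)]
        _ ≤ 2 * β ^ 2 * _ + 2 * β ^ 2 * (Mf * (ζ x.1 / c₀)) ^ 2 := by
            exact add_le_add (mul_le_mul_of_nonneg_left hS (by positivity))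
              (mul_le_mul_of_nonneg_left hgsq (by positivity))
        _ ≤ _ := by
            refine add_le_add le_rfl (le_trans (le_of_eq ?_) (mul_le_mul_of_nonneg_right hD2 (sq_nonneg _)))
            field_simp
  -- tails
  have htail : ∀ (Λ : Finset V) (x : ↥Λ), x.1 ≠ o →
      gibbs J β ρ Λ ξ {φ : ↥Λ → ℝ | ξ x.1 < |φ x|} ≤
        ENNReal.ofReal (Real.exp C * ((B (G.dist o x.1) : ℝ) ^ 3)⁻¹) := by
    intro Λ x hx
    have hd : 1 ≤ G.dist o x.1 := hconn.pos_dist_of_ne hx.symm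
    have hζξ : ζ x.1 = ξ x.1 := by
      rw [hζ, hξ]; dsimp only; rw [max_eq_left hd]
    have h1 := mul_meas_ge_le_lintegral (μ := gibbs J β ρ Λ ξ)
      (f := fun φ : ↥Λ → ℝ => ENNReal.ofReal (Real.exp (4 * φ x ^ 2))) (by fun_prop)
      (ENNReal.ofReal (Real.exp (4 * ξ x.1 ^ 2)))
    have h2 := h1.trans (hmom Λ x)
    have hsub : {φ : ↥Λ → ℝ | ξ x.1 < |φ x|} ⊆ {φ : ↥Λ → ℝ | ENNReal.ofReal (Real.exp (4 * ξ x.1 ^ 2)) ≤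
        ENNReal.ofReal (Real.exp (4 * φ x ^ 2))} := by
      intro φ hφ
      apply ENNReal.ofReal_le_ofReal
      apply Real.exp_le_exp.2
      rw [← sq_abs (φ x)]
      have := pow_le_pow_left₀ (hξ0 x.1) (le_of_lt hφ) 2
      linarith
    refine (measure_mono hsub).trans ?_
    have hpos : ENNReal.ofReal (Real.exp (4 * ξ x.1 ^ 2)) ≠ 0 := by
      simp [Real.exp_pos]
    rw [mul_comm, ← ENNReal.le_div_iff_mul_le (Or.inl hpos) (Or.inl ENNReal.ofReal_ne_top),
      ← ENNReal.ofReal_div_of_pos (Real.exp_pos _), ← Real.exp_sub, hζξ] at h2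
    refine h2.trans (le_of_eq ?_)
    congr 1
    have e : C + ξ x.1 ^ 2 - 4 * ξ x.1 ^ 2 = C - Real.log ((B (G.dist o x.1) : ℝ) ^ 3) := by
      rw [Real.log_pow, ← hXsq]; push_cast; ring
    have hBp : (0 : ℝ) < B (G.dist o x.1) := by exact_mod_cast hB1 _
    rw [e, Real.exp_sub, Real.exp_log (by positivity), div_eq_mul_inv]
  -- conclusion
  have hsumm : Summable (fun x : V => ((B (G.dist o x) : ℝ) ^ 3)⁻¹) := ball_summable G hconn o
  obtain ⟨s, hs⟩ := summable_iff_vanishing_norm.1 hsumm (ε / Real.exp C) (by positivity)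
  refine ⟨insert o s, fun Λ' Λ h0 h1 => ?_⟩
  change gibbs J β ρ Λ ξ {φ : ↥Λ → ℝ | ∃ x : ↥Λ, x.1 ∉ Λ' ∧ ξ x.1 < |φ x|} < _
  have hsub : {φ : ↥Λ → ℝ | ∃ x : ↥Λ, x.1 ∉ Λ' ∧ ξ x.1 < |φ x|} ⊆
      ⋃ x ∈ (Finset.univ.filter fun x : ↥Λ => x.1 ∉ Λ'), {φ : ↥Λ → ℝ | ξ x.1 < |φ x|} := by
    rintro φ ⟨x, hx, hφ⟩
    refine Set.mem_biUnion (x := x) ?_ hφ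
    simpa using hx
  calc _ ≤ _ := measure_mono hsub
    _ ≤ _ := measure_biUnion_finset_le _ _
    _ ≤ ∑ x ∈ (Finset.univ.filter fun x : ↥Λ => x.1 ∉ Λ'),
          ENNReal.ofReal (Real.exp C * ((B (G.dist o x.1) : ℝ) ^ 3)⁻¹) := by
        refine Finset.sum_le_sum fun x hx => htail Λ x ?_
        rintro hxo
        refine (Finset.mem_filter.1 hx).2 (h0 ?_)
        rw [hxo]; exact Finset.mem_insert_self _ _
    _ = ENNReal.ofReal (Real.exp C * ∑ x ∈ (Finset.univ.filter fun x : ↥Λ => x.1 ∉ Λ'),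
          ((B (G.dist o x.1) : ℝ) ^ 3)⁻¹) := by
        rw [← ENNReal.ofReal_sum_of_nonneg (fun x _ => by positivity), Finset.mul_sum]
    _ < ENNReal.ofReal ε := by
        rw [ENNReal.ofReal_lt_ofReal_iff hε]
        have h2 := hs ((Finset.univ.filter fun x : ↥Λ => x.1 ∉ Λ').map (Function.Embedding.subtype _)) (by
          rw [Finset.disjoint_left]
          intro z hz hzs
          obtain ⟨w, hw, rfl⟩ := Finset.mem_map.1 hz
          exact (Finset.mem_filter.1 hw).2 (h0 (Finset.mem_insert_of_mem hzs)))
        rw [Finset.sum_map] at h2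
        have h3 := (le_abs_self _).trans_lt h2
        rw [lt_div_iff₀ (Real.exp_pos _)] at h3
        rw [mul_comm]
        exact h3
end

section
/- (Monotonicity in β of the boundary-layer marginal.) Let G = (V,E) be a connected graph of degree bounded by D > 0, with nearest-neighbour ferromagnetic interactions, and let ρ be an even measure on ℝ with 0 < ∫_ℝ e^{a|u|²}dρ(u) < ∞ for all a > 0. Fix a finite Λ ⊂ V and let ρ̃ be the vertex-dependent single-site measure equal to ζ_{a,B} on ∂Λ and to ρ on Λ∖∂Λ (with a = 8βD-type constants fixed; a, B > 0 arbitrary fixed constants suffice, with dζ_{a,B}(u) = 1_{u ≥ B}dρ_a(u − B)). Then for any β' ≥ β ≥ 0, the ∂Λ-marginal of ν^0_{Λ,β,ρ̃} is stochastically dominated by the ∂Λ-marginal of ν^0_{Λ,β',ρ̃}. -/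
open MeasureTheory
open scoped ENNReal Classical

/-- The finite-volume Gibbs measure on `ℝ^Λ` with vertex-dependent single-site
measures `ρ̃_x`. -/
noncomputable def gibbsV {V : Type*} (J : V → V → ℝ) (β : ℝ) (ρF : V → Measure ℝ)
    (Λ : Finset V) (ξ : V → ℝ) : Measure (↥Λ → ℝ) :=
  (((Measure.pi fun x : ↥Λ => ρF x.1).withDensity
      fun φ => ENNReal.ofReal (Real.exp (hamil J β Λ ξ φ))) Set.univ)⁻¹ •
    (Measure.pi fun x : ↥Λ => ρF x.1).withDensity
      fun φ => ENNReal.ofReal (Real.exp (hamil J β Λ ξ φ))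

/-- The `Λ'`-marginal of a measure on `ℝ^Λ`, for `Λ' ⊆ Λ`. -/
noncomputable def marg {V : Type*} {Λ' Λ : Finset V} (h : Λ' ⊆ Λ)
    (μ : Measure (↥Λ → ℝ)) : Measure (↥Λ' → ℝ) :=
  μ.map fun φ x => φ ⟨x.1, h x.2⟩

/-- The tilted single-site measure `dρ_b(u) = e^(b|u|²) dρ(u)`. -/
noncomputable def rhoMod (ρ : Measure ℝ) (b : ℝ) : Measure ℝ :=
  ρ.withDensity fun u => ENNReal.ofReal (Real.exp (b * u ^ 2))

/-- The shifted truncated single-site measure `dζ_{a,B}(u) = 1_{u ≥ B} dρ_a(u - B)`. -/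
noncomputable def zetaM (ρ : Measure ℝ) (a B : ℝ) : Measure ℝ :=
  ((rhoMod ρ a).map (fun u => u + B)).restrict (Set.Ici B)

/-- Nearest-neighbour interactions on a graph `G`. -/
noncomputable def Jnn {V : Type*} (G : SimpleGraph V) : V → V → ℝ :=
  fun x y => if G.Adj x y then 1 else 0

/-- `∂Λ`: the set of vertices of `Λ` adjacent to `V ∖ Λ`. -/
noncomputable def bdry {V : Type*} (G : SimpleGraph V) (Λ : Finset V) : Finset V :=
  Λ.filter fun x => ∃ y, y ∉ Λ ∧ G.Adj x y

/-- Stochastic domination. -/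
def StochDom {ι : Type*} (μ ν : Measure (ι → ℝ)) : Prop :=
  ∀ g : (ι → ℝ) → ℝ, Measurable g → Monotone g → (∃ K, ∀ φ, |g φ| ≤ K) →
    ∫ φ, g φ ∂μ ≤ ∫ φ, g φ ∂ν


/-- monomials in the signed variables -/
def monoM {κ : Type*} [Fintype κ] [DecidableEq κ] (r : κ → ℝ) : Submonoid ((κ → ℤˣ) → ℝ) where
  carrier := {F | ∃ c : ℝ, 0 ≤ c ∧ ∃ n : κ → ℕ,
    F = fun σ => c * ∏ k, (((σ k : ℤ) : ℝ) * r k) ^ n k}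
  one_mem' := ⟨1, zero_le_one, 0, by ext; simp⟩
  mul_mem' := by
    rintro _ _ ⟨c, hc, n, rfl⟩ ⟨d, hd, m, rfl⟩
    refine ⟨c * d, mul_nonneg hc hd, n + m, ?_⟩
    ext σ
    simp only [Pi.mul_apply, Pi.add_apply, pow_add, Finset.prod_mul_distrib]
    ring

/-- closed cone generated by monomials -/
noncomputable def coneK {κ : Type*} [Fintype κ] [DecidableEq κ] (r : κ → ℝ) : Subsemiring ((κ → ℤˣ) → ℝ) :=
  (monoM r).subsemiringClosure.topologicalClosure

lemma monoM_le {κ : Type*} [Fintype κ] [DecidableEq κ] (r : κ → ℝ) {F : (κ → ℤˣ) → ℝ} (h : F ∈ monoM r) :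
    F ∈ coneK r := by
  apply Subsemiring.le_topologicalClosure
  show F ∈ AddSubmonoid.closure _
  exact AddSubmonoid.subset_closure h

lemma coneK_const {κ : Type*} [Fintype κ] [DecidableEq κ] (r : κ → ℝ) {c : ℝ} (hc : 0 ≤ c) :
    (fun _ => c) ∈ coneK r := monoM_le r ⟨c, hc, 0, by ext; simp⟩

lemma coneK_var {κ : Type*} [Fintype κ] [DecidableEq κ] (r : κ → ℝ) (k : κ) :
    (fun σ => ((σ k : ℤ) : ℝ) * r k) ∈ coneK r := by
  refine monoM_le r ⟨1, zero_le_one, Pi.single k 1, ?_⟩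
  ext σ
  rw [Finset.prod_eq_single k] <;> simp +contextual

lemma coneK_sum_nonneg {κ : Type*} [Fintype κ] [DecidableEq κ] (r : κ → ℝ) {F : (κ → ℤˣ) → ℝ}
    (h : F ∈ coneK r) : 0 ≤ ∑ σ, F σ := by
  have hcl : IsClosed {F : (κ → ℤˣ) → ℝ | 0 ≤ ∑ σ, F σ} :=
    isClosed_le continuous_const (by fun_prop)
  refine closure_minimal ?_ hcl h
  intro F hF
  change F ∈ AddSubmonoid.closure _ at hF
  induction hF using AddSubmonoid.closure_induction with
  | mem F hF =>
    obtain ⟨c, hc, n, rfl⟩ := hF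
    simp only [Set.mem_ofPred_eq]
    rw [← Finset.mul_sum]
    refine mul_nonneg hc ?_
    have := Finset.prod_univ_sum (fun _ : κ => (Finset.univ : Finset ℤˣ))
      (fun k s => ((((s : ℤˣ) : ℤ) : ℝ) * r k) ^ n k)
    rw [Fintype.piFinset_univ] at this
    rw [← this]
    refine Finset.prod_nonneg fun k _ => ?_
    have h2 : (Finset.univ : Finset ℤˣ) = {1, -1} := rfl
    rw [h2, Finset.sum_pair (by decide)]
    rcases Nat.even_or_odd (n k) with he | ho
    · exact add_nonneg (he.pow_nonneg _) (he.pow_nonneg _)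
    · simp [ho.neg_pow]
  | zero => simp
  | add F G _ _ hF hG =>
    simp only [Set.mem_ofPred_eq, Pi.add_apply, Finset.sum_add_distrib] at *
    positivity

lemma coneK_smul {κ : Type*} [Fintype κ] [DecidableEq κ] (r : κ → ℝ) {F : (κ → ℤˣ) → ℝ} {c : ℝ} (hc : 0 ≤ c)
    (h : F ∈ coneK r) : (fun σ => c * F σ) ∈ coneK r :=
  mul_mem (coneK_const r hc) h

lemma coneK_hasSum {κ : Type*} [Fintype κ] [DecidableEq κ] (r : κ → ℝ) {f : ℕ → (κ → ℤˣ) → ℝ}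
    {F : (κ → ℤˣ) → ℝ} (h : ∀ n, f n ∈ coneK r) (hs : HasSum f F) : F ∈ coneK r := by
  have hcl : IsClosed (coneK r : Set ((κ → ℤˣ) → ℝ)) :=
    Subsemiring.isClosed_topologicalClosure _
  exact hcl.mem_of_tendsto hs (Filter.Eventually.of_forall fun s => sum_mem fun i _ => h i)

lemma coneK_exp {κ : Type*} [Fintype κ] [DecidableEq κ] (r : κ → ℝ) {F : (κ → ℤˣ) → ℝ}
    (h : F ∈ coneK r) : (fun σ => Real.exp (F σ)) ∈ coneK r := by
  refine coneK_hasSum r (f := fun n σ => (1 / (n.factorial : ℝ)) * F σ ^ n) (fun n => ?_) ?_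
  · exact coneK_smul r (by positivity) (pow_mem h n)
  · rw [Pi.hasSum]
    intro σ
    have := NormedSpace.expSeries_div_hasSum_exp (F σ)
    rw [← Real.exp_eq_exp_ℝ] at this
    have e : (fun n : ℕ => 1 / (n.factorial : ℝ) * F σ ^ n) =
        fun n : ℕ => F σ ^ n / (n.factorial : ℝ) := by
      funext n
      ring
    rw [e]
    exact this

lemma coneK_sinh {κ : Type*} [Fintype κ] [DecidableEq κ] (r : κ → ℝ) {F : (κ → ℤˣ) → ℝ}
    (h : F ∈ coneK r) : (fun σ => Real.sinh (F σ)) ∈ coneK r := by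
  refine coneK_hasSum r
    (f := fun n σ => (1 / ((2 * n + 1).factorial : ℝ)) * F σ ^ (2 * n + 1)) (fun n => ?_) ?_
  · exact coneK_smul r (by positivity) (pow_mem h _)
  · rw [Pi.hasSum]
    intro σ
    have := Real.hasSum_sinh (F σ)
    convert this using 1
    funext n
    ring

lemma coneK_main {κ : Type*} [Fintype κ] [DecidableEq κ] (r : κ → ℝ) {F G : (κ → ℤˣ) → ℝ}
    (h1 : (fun σ => G σ + F σ) ∈ coneK r) (h2 : (fun σ => G σ - F σ) ∈ coneK r) :
    ∑ σ, Real.exp (F σ) ≤ ∑ σ, Real.exp (G σ) := by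
  have hS := coneK_exp r (coneK_smul r (c := 1 / 2) (by norm_num) h1)
  have hD := coneK_sinh r (coneK_smul r (c := 1 / 2) (by norm_num) h2)
  have := coneK_sum_nonneg r (coneK_smul r (c := 2) (by norm_num) (mul_mem hS hD))
  rw [← sub_nonneg, ← Finset.sum_sub_distrib]
  refine this.trans_eq (Finset.sum_congr rfl fun σ _ => ?_)
  simp only [Pi.mul_apply, Real.sinh_eq]
  have e1 : G σ = 1 / 2 * (G σ + F σ) + 1 / 2 * (G σ - F σ) := by ring
  have e2 : F σ = 1 / 2 * (G σ + F σ) + -(1 / 2 * (G σ - F σ)) := by ring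
  conv_rhs => rw [e1, e2]
  rw [Real.exp_add, Real.exp_add]
  ring_nf

/-- one-dimensional four functions inequality -/
lemma four_alg (a b c d : ℝ≥0∞) (h1 : a ≤ c) (h2 : b ≤ c) (h : a * b ≤ c * d) :
    a + b ≤ c + d := by
  by_cases hc : c = ⊤
  · simp [hc]
  by_cases hd : d = ⊤
  · simp [hd]
  have ha : a ≠ ⊤ := ne_top_of_le_ne_top hc h1
  have hb : b ≠ ⊤ := ne_top_of_le_ne_top hc h2
  lift a to NNReal using ha
  lift b to NNReal using hb
  lift c to NNReal using hc
  lift d to NNReal using hd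
  norm_cast at *
  rcases eq_or_ne c 0 with rfl | h0
  · simp_all
  have hc0 : (0 : ℝ) < c := by positivity
  have h1' : (a : ℝ) ≤ c := by exact_mod_cast h1
  have h2' : (b : ℝ) ≤ c := by exact_mod_cast h2
  have h' : (a : ℝ) * b ≤ c * d := by exact_mod_cast h
  have : (a : ℝ) + b ≤ c + d := by
    by_contra hh
    push Not at hh
    nlinarith [mul_nonneg (sub_nonneg.2 h1') (sub_nonneg.2 h2'), mul_lt_mul_of_pos_left hh hc0]
  exact_mod_cast this

lemma four_one (μ : Measure ℝ) [SigmaFinite μ] (f1 f2 f3 f4 : ℝ → ℝ≥0∞)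
    (h1 : Measurable f1) (h2 : Measurable f2) (h3 : Measurable f3) (h4 : Measurable f4)
    (h : ∀ x y, f1 x * f2 y ≤ f3 (x ⊔ y) * f4 (x ⊓ y)) :
    (∫⁻ x, f1 x ∂μ) * (∫⁻ x, f2 x ∂μ) ≤ (∫⁻ x, f3 x ∂μ) * (∫⁻ x, f4 x ∂μ) := by
  have key : ∀ f g : ℝ → ℝ≥0∞, Measurable f → Measurable g →
      2 * ((∫⁻ x, f x ∂μ) * (∫⁻ x, g x ∂μ)) =
        ∫⁻ z, (f z.1 * g z.2 + f z.2 * g z.1) ∂(μ.prod μ) := by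
    intro f g hf hg
    rw [lintegral_add_left (by fun_prop), lintegral_prod_mul hf.aemeasurable hg.aemeasurable]
    simp_rw [mul_comm (f _) (g _)]
    have e : ∫⁻ z : ℝ × ℝ, g z.1 * f z.2 ∂(μ.prod μ) = _ :=
      lintegral_prod_mul hg.aemeasurable hf.aemeasurable
    rw [e, two_mul, mul_comm (∫⁻ x, g x ∂μ)]
  have main : 2 * ((∫⁻ x, f1 x ∂μ) * (∫⁻ x, f2 x ∂μ)) ≤
      2 * ((∫⁻ x, f3 x ∂μ) * (∫⁻ x, f4 x ∂μ)) := by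
    rw [key _ _ h1 h2, key _ _ h3 h4]
    refine lintegral_mono fun z => ?_
    obtain ⟨x, y⟩ := z
    have gen : ∀ x y : ℝ, x ≤ y →
        f1 x * f2 y + f1 y * f2 x ≤ f3 y * f4 x + f3 x * f4 y := by
      intro x y hxy
      have hx := h x x
      have hy := h y y
      have hxy1 := h x y
      have hxy2 := h y x
      simp only [sup_idem, inf_idem, sup_of_le_right hxy, inf_of_le_left hxy,
        sup_of_le_left hxy, inf_of_le_right hxy] at *
      refine four_alg _ _ _ _ hxy1 hxy2 ?_
      calc f1 x * f2 y * (f1 y * f2 x) = (f1 x * f2 x) * (f1 y * f2 y) := by ring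
        _ ≤ (f3 x * f4 x) * (f3 y * f4 y) := by gcongr
        _ = _ := by ring
    show f1 x * f2 y + f1 y * f2 x ≤ f3 x * f4 y + f3 y * f4 x
    rcases le_total x y with hxy | hxy
    · rw [add_comm (f3 x * f4 y)]
      exact gen x y hxy
    · rw [add_comm (f1 x * f2 y)]
      exact gen y x hxy
  exact (ENNReal.mul_le_mul_iff_right (by norm_num) (by norm_num)).1 main

lemma four_marg {ι : Type*} [DecidableEq ι] (μ : ι → Measure ℝ)
    [∀ i, SigmaFinite (μ i)] (f1 f2 f3 f4 : (ι → ℝ) → ℝ≥0∞)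
    (h1 : Measurable f1) (h2 : Measurable f2) (h3 : Measurable f3) (h4 : Measurable f4)
    (h : ∀ x y, f1 x * f2 y ≤ f3 (x ⊔ y) * f4 (x ⊓ y)) (s : Finset ι) :
    ∀ x y, lmarginal μ s f1 x * lmarginal μ s f2 y ≤
      lmarginal μ s f3 (x ⊔ y) * lmarginal μ s f4 (x ⊓ y) := by
  induction s using Finset.induction_on with
  | empty => simpa using h
  | insert i s hi ih =>
    intro x y
    rw [lmarginal_insert _ h1 hi, lmarginal_insert _ h2 hi, lmarginal_insert _ h3 hi,
      lmarginal_insert _ h4 hi]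
    have hm : ∀ f : (ι → ℝ) → ℝ≥0∞, Measurable f → ∀ x : ι → ℝ,
        Measurable fun t => lmarginal μ s f (Function.update x i t) :=
      fun f hf x => (hf.lmarginal μ).comp (measurable_update x)
    refine four_one (μ i) _ _ _ _ (hm _ h1 _) (hm _ h2 _) (hm _ h3 _) (hm _ h4 _) fun a b => ?_
    refine (ih _ _).trans_eq ?_
    congr 2
    · ext j
      by_cases hj : j = i
      · subst hj; simp
      · simp [hj]
    · ext j
      by_cases hj : j = i
      · subst hj; simp
      · simp [hj]

/-- sign flips of sum and difference coordinates -/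
noncomputable def flipT (e n : ℤˣ) (z : ℝ × ℝ) : ℝ × ℝ :=
  ((((e : ℤ) : ℝ) * (z.1 + z.2) + ((n : ℤ) : ℝ) * (z.1 - z.2)) / 2,
    (((e : ℤ) : ℝ) * (z.1 + z.2) - ((n : ℤ) : ℝ) * (z.1 - z.2)) / 2)

lemma flipT_mp (ν : Measure ℝ) [SigmaFinite ν] (hν : ν.map (fun u => -u) = ν) (e n : ℤˣ) :
    MeasurePreserving (flipT e n) (ν.prod ν) (ν.prod ν) := by
  have hneg : MeasurePreserving (fun u : ℝ => -u) ν ν := ⟨measurable_neg, hν⟩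
  have hnn : MeasurePreserving (Prod.map (fun u : ℝ => -u) (fun u : ℝ => -u))
    (ν.prod ν) (ν.prod ν) := hneg.prod hneg
  have hsw : MeasurePreserving (Prod.swap : ℝ × ℝ → ℝ × ℝ) (ν.prod ν) (ν.prod ν) :=
    Measure.measurePreserving_swap
  rcases Int.units_eq_one_or e with rfl | rfl <;> rcases Int.units_eq_one_or n with rfl | rfl
  · convert MeasurePreserving.id (ν.prod ν) using 1
    ext z <;> simp [flipT]
  · convert hsw using 1
    ext z <;> simp [flipT] <;> ring
  · convert hnn.comp hsw using 1
    ext z <;> simp [flipT] <;> ring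
  · convert hnn using 1
    ext z <;> simp [flipT] <;> ring

/-- coordinatewise sign flips -/
noncomputable def flipP {κ : Type*} (σ : κ ⊕ κ → ℤˣ) (z : κ → ℝ × ℝ) : κ → ℝ × ℝ :=
  fun i => flipT (σ (Sum.inl i)) (σ (Sum.inr i)) (z i)

/-- sum and difference coordinates -/
def sumdiff {κ : Type*} (z : κ → ℝ × ℝ) : κ ⊕ κ → ℝ :=
  Sum.elim (fun i => (z i).1 + (z i).2) (fun i => (z i).1 - (z i).2)

lemma ginibre {κ : Type*} [Fintype κ] [DecidableEq κ] (ν : κ → Measure ℝ)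
    [∀ i, SigmaFinite (ν i)] (hν : ∀ i, (ν i).map (fun u => -u) = ν i)
    (H1 H2 : (κ → ℝ × ℝ) → ℝ) (hm1 : Measurable H1) (hm2 : Measurable H2)
    (hS : ∀ z, (fun σ => H2 (flipP σ z) + H1 (flipP σ z)) ∈ coneK (sumdiff z))
    (hD : ∀ z, (fun σ => H2 (flipP σ z) - H1 (flipP σ z)) ∈ coneK (sumdiff z)) :
    ∫⁻ z, ENNReal.ofReal (Real.exp (H1 z)) ∂(Measure.pi fun i => (ν i).prod (ν i)) ≤
    ∫⁻ z, ENNReal.ofReal (Real.exp (H2 z)) ∂(Measure.pi fun i => (ν i).prod (ν i)) := by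
  have mp : ∀ σ : κ ⊕ κ → ℤˣ, MeasurePreserving (flipP σ)
      (Measure.pi fun i => (ν i).prod (ν i)) (Measure.pi fun i => (ν i).prod (ν i)) := fun σ =>
    measurePreserving_pi _ _ fun i => flipT_mp (ν i) (hν i) _ _
  have key : ∀ H : (κ → ℝ × ℝ) → ℝ, Measurable H →
      (Fintype.card (κ ⊕ κ → ℤˣ) : ℝ≥0∞) *
        ∫⁻ z, ENNReal.ofReal (Real.exp (H z)) ∂(Measure.pi fun i => (ν i).prod (ν i)) =
      ∫⁻ z, ENNReal.ofReal (∑ σ, Real.exp (H (flipP σ z)))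
        ∂(Measure.pi fun i => (ν i).prod (ν i)) := by
    intro H hH
    simp_rw [ENNReal.ofReal_sum_of_nonneg (fun _ _ => (Real.exp_pos _).le)]
    rw [lintegral_finsetSum]
    · have : ∀ σ, ∫⁻ z, ENNReal.ofReal (Real.exp (H (flipP σ z)))
          ∂(Measure.pi fun i => (ν i).prod (ν i)) =
          ∫⁻ z, ENNReal.ofReal (Real.exp (H z)) ∂(Measure.pi fun i => (ν i).prod (ν i)) :=
        fun σ => (mp σ).lintegral_comp (f := fun z => ENNReal.ofReal (Real.exp (H z)))
          (by fun_prop)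
      simp_rw [this]
      simp
    · intro σ _
      have := (mp σ).measurable
      fun_prop
  have hcard : (Fintype.card (κ ⊕ κ → ℤˣ) : ℝ≥0∞) ≠ 0 := by
    exact_mod_cast Fintype.card_ne_zero
  refine (ENNReal.mul_le_mul_iff_right hcard (ENNReal.natCast_ne_top _)).1 ?_
  rw [key _ hm1, key _ hm2]
  exact lintegral_mono fun z => ENNReal.ofReal_le_ofReal (coneK_main (sumdiff z) (hS z) (hD z))

lemma flip_lin {κ : Type*} [Fintype κ] [DecidableEq κ] (z : κ → ℝ × ℝ) (i : κ) (α γ : ℝ)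
    (h1 : 0 ≤ α + γ) (h2 : 0 ≤ α - γ) :
    (fun σ => α * (flipP σ z i).1 + γ * (flipP σ z i).2) ∈ coneK (sumdiff z) := by
  have e1 := coneK_smul _ (c := (α + γ) / 2) (by linarith) (coneK_var (sumdiff z) (Sum.inl i))
  have e2 := coneK_smul _ (c := (α - γ) / 2) (by linarith) (coneK_var (sumdiff z) (Sum.inr i))
  convert add_mem e1 e2 using 1
  ext σ
  simp [flipP, flipT, sumdiff]
  ring

lemma flip_quad {κ : Type*} [Fintype κ] [DecidableEq κ] (z : κ → ℝ × ℝ) (i j : κ) (α γ : ℝ)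
    (h1 : 0 ≤ α + γ) (h2 : 0 ≤ α - γ) :
    (fun σ => α * ((flipP σ z i).1 * (flipP σ z j).1) + γ * ((flipP σ z i).2 * (flipP σ z j).2))
      ∈ coneK (sumdiff z) := by
  have pi := coneK_var (sumdiff z) (Sum.inl i)
  have qi := coneK_var (sumdiff z) (Sum.inr i)
  have pj := coneK_var (sumdiff z) (Sum.inl j)
  have qj := coneK_var (sumdiff z) (Sum.inr j)
  have e1 := coneK_smul _ (c := (α + γ) / 4) (by linarith) (add_mem (mul_mem pi pj) (mul_mem qi qj))
  have e2 := coneK_smul _ (c := (α - γ) / 4) (by linarith) (add_mem (mul_mem pi qj) (mul_mem qi pj))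
  convert add_mem e1 e2 using 1
  ext σ
  simp [flipP, flipT, sumdiff]
  ring

/-- quadratic form -/
def quadF {ι : Type*} [Fintype ι] (c : ι → ι → ℝ) (x : ι → ℝ) : ℝ :=
  ∑ i, ∑ j, c i j * (x i * x j)

lemma measurable_quadF {ι : Type*} [Fintype ι] (c : ι → ι → ℝ) : Measurable (quadF c) := by
  unfold quadF
  fun_prop

/-- Boltzmann weight -/
noncomputable def wgt {ι : Type*} [Fintype ι] (c : ι → ι → ℝ) (β : ℝ) (x : ι → ℝ) : ℝ≥0∞ :=
  ENNReal.ofReal (Real.exp (β * quadF c x))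

lemma measurable_wgt {ι : Type*} [Fintype ι] (c : ι → ι → ℝ) (β : ℝ) :
    Measurable (wgt c β) := by
  have := measurable_quadF c
  unfold wgt
  fun_prop

lemma lmarg_mul {ι : Type*} [DecidableEq ι] (μ : ι → Measure ℝ)
    [∀ i, SigmaFinite (μ i)] (t : Finset ι) (f g : (ι → ℝ) → ℝ≥0∞) (hf : Measurable f)
    (hg : Measurable g) (x y : ι → ℝ) :
    lmarginal μ t f x * lmarginal μ t g y =
      ∫⁻ z : t → ℝ × ℝ, f (Function.updateFinset x t fun i => (z i).1) *
        g (Function.updateFinset y t fun i => (z i).2)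
        ∂(Measure.pi fun i : t => (μ i).prod (μ i)) := by
  have hf' : Measurable fun u : t → ℝ => f (Function.updateFinset x t u) :=
    hf.comp measurable_updateFinset
  have hg' : Measurable fun u : t → ℝ => g (Function.updateFinset y t u) :=
    hg.comp measurable_updateFinset
  unfold lmarginal
  rw [← lintegral_prod_mul hf'.aemeasurable hg'.aemeasurable]
  rw [← (measurePreserving_arrowProdEquivProdArrow ℝ ℝ t (fun i => μ i)
    (fun i => μ i)).lintegral_comp (by fun_prop)]
  rfl

lemma measurable_ham {ι : Type*} [Fintype ι] [DecidableEq ι] (t : Finset ι)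
    (c : ι → ι → ℝ) (β β' : ℝ) (x y : ι → ℝ) : Measurable fun z : t → ℝ × ℝ =>
      β' * quadF c (Function.updateFinset x t fun i => (z i).1) +
        β * quadF c (Function.updateFinset y t fun i => (z i).2) := by
  have h1 : Measurable fun z : t → ℝ × ℝ => Function.updateFinset x t fun i => (z i).1 := by
    refine measurable_pi_lambda _ fun i => ?_
    by_cases hi : i ∈ t
    · simp only [Function.updateFinset, hi, dif_pos]
      fun_prop
    · simp only [Function.updateFinset, hi, not_false_eq_true, dif_neg]
      fun_prop
  have h2 : Measurable fun z : t → ℝ × ℝ => Function.updateFinset y t fun i => (z i).2 := by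
    refine measurable_pi_lambda _ fun i => ?_
    by_cases hi : i ∈ t
    · simp only [Function.updateFinset, hi, dif_pos]
      fun_prop
    · simp only [Function.updateFinset, hi, not_false_eq_true, dif_neg]
      fun_prop
  exact (((measurable_quadF c).comp h1).const_mul _).add
    (((measurable_quadF c).comp h2).const_mul _)

set_option maxHeartbeats 1000000 in
lemma ginibre_marg {ι : Type*} [Fintype ι] [DecidableEq ι] (μ : ι → Measure ℝ)
    [∀ i, SigmaFinite (μ i)] (t : Finset ι) (hμ : ∀ i ∈ t, (μ i).map (fun u => -u) = μ i)
    (c : ι → ι → ℝ) (hc : ∀ i j, 0 ≤ c i j) (β β' : ℝ) (hβ : 0 ≤ β) (hββ : β ≤ β')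
    (x y : ι → ℝ) (hx : ∀ i ∉ t, 0 ≤ x i) (hy : ∀ i ∉ t, 0 ≤ y i) :
    lmarginal μ t (wgt c β') x * lmarginal μ t (wgt c β) y ≤
      lmarginal μ t (wgt c β') (x ⊔ y) * lmarginal μ t (wgt c β) (x ⊓ y) := by
  rw [lmarg_mul _ _ _ _ (measurable_wgt _ _) (measurable_wgt _ _),
    lmarg_mul _ _ _ _ (measurable_wgt _ _) (measurable_wgt _ _)]
  simp only [wgt, ← ENNReal.ofReal_mul (Real.exp_pos _).le, ← Real.exp_add]
  have hH := measurable_ham t c β β'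
  have hβ' := hβ.trans hββ
  have gen : ∀ i, i ∉ t → 0 ≤ x i ⊓ y i ∧ x i ⊓ y i ≤ x i ∧ x i ⊓ y i ≤ y i ∧
      x i ⊔ y i = x i + y i - x i ⊓ y i := by
    intro i hi
    refine ⟨le_inf (hx i hi) (hy i hi), inf_le_left, inf_le_right, ?_⟩
    have := inf_add_sup (x i) (y i)
    linarith
  refine ginibre (fun i : t => μ i) (fun i => hμ i i.2) _ _ (hH _ _) (hH _ _)
    (fun z => ?_) (fun z => ?_)
  · have : (∑ i, ∑ j, fun σ => c i j *
        (β' * (Function.updateFinset (x ⊔ y) t (fun i => (flipP σ z i).1) i *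
          Function.updateFinset (x ⊔ y) t (fun i => (flipP σ z i).1) j) +
        β * (Function.updateFinset (x ⊓ y) t (fun i => (flipP σ z i).2) i *
          Function.updateFinset (x ⊓ y) t (fun i => (flipP σ z i).2) j) +
        (β' * (Function.updateFinset x t (fun i => (flipP σ z i).1) i *
          Function.updateFinset x t (fun i => (flipP σ z i).1) j) +
        β * (Function.updateFinset y t (fun i => (flipP σ z i).2) i *
          Function.updateFinset y t (fun i => (flipP σ z i).2) j)))) ∈ coneK (sumdiff z) := by
      refine sum_mem fun i _ => sum_mem fun j _ => coneK_smul _ (hc i j) ?_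
      by_cases hi : i ∈ t <;> by_cases hj : j ∈ t
      · simp only [Function.updateFinset, hi, hj, dif_pos]
        have := flip_quad z ⟨i, hi⟩ ⟨j, hj⟩ (2 * β') (2 * β) (by linarith) (by linarith)
        convert this using 1
        ext σ
        ring
      · simp only [Function.updateFinset, hi, hj, dif_pos, Pi.sup_apply, Pi.inf_apply]
        simp only [not_false_eq_true, dif_neg]
        obtain ⟨g1, g2, g3, g4⟩ := gen j hj
        rw [g4]
        generalize x j ⊓ y j = m at *
        have := flip_lin z ⟨i, hi⟩ (β' * (2 * x j + y j - m)) (β * (m + y j))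
          (by have := mul_nonneg hβ' (show 0 ≤ 2 * x j + y j - m by linarith)
              have := mul_nonneg hβ (show 0 ≤ m + y j by linarith)
              linarith)
          (by nlinarith [mul_nonneg (sub_nonneg.2 hββ) (show 0 ≤ m + y j by linarith),
                mul_nonneg hβ' (sub_nonneg.2 g2)])
        convert this using 1
        ext σ
        ring
      · simp only [Function.updateFinset, hi, hj, dif_pos, Pi.sup_apply, Pi.inf_apply]
        simp only [not_false_eq_true, dif_neg]
        obtain ⟨g1, g2, g3, g4⟩ := gen i hi
        rw [g4]
        generalize x i ⊓ y i = m at *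
        have := flip_lin z ⟨j, hj⟩ (β' * (2 * x i + y i - m)) (β * (m + y i))
          (by have := mul_nonneg hβ' (show 0 ≤ 2 * x i + y i - m by linarith)
              have := mul_nonneg hβ (show 0 ≤ m + y i by linarith)
              linarith)
          (by nlinarith [mul_nonneg (sub_nonneg.2 hββ) (show 0 ≤ m + y i by linarith),
                mul_nonneg hβ' (sub_nonneg.2 g2)])
        convert this using 1
        ext σ
        ring
      · simp only [Function.updateFinset, hi, hj, Pi.sup_apply, Pi.inf_apply]
        simp only [not_false_eq_true, dif_neg]
        apply coneK_const
        have := hx i hi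
        have := hx j hj
        have := hy i hi
        have := hy j hj
        have := (gen i hi).1
        have := (gen j hj).1
        positivity
    convert this using 1
    ext σ
    simp only [quadF, Finset.sum_apply, Finset.mul_sum, ← Finset.sum_add_distrib]
    refine Finset.sum_congr rfl fun i _ => Finset.sum_congr rfl fun j _ => ?_
    ring
  · have : (∑ i, ∑ j, fun σ => c i j *
        (β' * (Function.updateFinset (x ⊔ y) t (fun i => (flipP σ z i).1) i *
          Function.updateFinset (x ⊔ y) t (fun i => (flipP σ z i).1) j) +
        β * (Function.updateFinset (x ⊓ y) t (fun i => (flipP σ z i).2) i *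
          Function.updateFinset (x ⊓ y) t (fun i => (flipP σ z i).2) j) -
        (β' * (Function.updateFinset x t (fun i => (flipP σ z i).1) i *
          Function.updateFinset x t (fun i => (flipP σ z i).1) j) +
        β * (Function.updateFinset y t (fun i => (flipP σ z i).2) i *
          Function.updateFinset y t (fun i => (flipP σ z i).2) j)))) ∈ coneK (sumdiff z) := by
      refine sum_mem fun i _ => sum_mem fun j _ => coneK_smul _ (hc i j) ?_
      by_cases hi : i ∈ t <;> by_cases hj : j ∈ t
      · simp only [Function.updateFinset, hi, hj, dif_pos, sub_self]
        exact coneK_const _ le_rfl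
      · simp only [Function.updateFinset, hi, hj, dif_pos, Pi.sup_apply, Pi.inf_apply]
        simp only [not_false_eq_true, dif_neg]
        obtain ⟨g1, g2, g3, g4⟩ := gen j hj
        rw [g4]
        generalize x j ⊓ y j = m at *
        have := flip_lin z ⟨i, hi⟩ (β' * (y j - m)) (β * (m - y j))
          (by nlinarith [mul_nonneg (sub_nonneg.2 hββ) (sub_nonneg.2 g3)])
          (by nlinarith [mul_nonneg hβ' (sub_nonneg.2 g3), mul_nonneg hβ (sub_nonneg.2 g3)])
        convert this using 1
        ext σ
        ring
      · simp only [Function.updateFinset, hi, hj, dif_pos, Pi.sup_apply, Pi.inf_apply]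
        simp only [not_false_eq_true, dif_neg]
        obtain ⟨g1, g2, g3, g4⟩ := gen i hi
        rw [g4]
        generalize x i ⊓ y i = m at *
        have := flip_lin z ⟨j, hj⟩ (β' * (y i - m)) (β * (m - y i))
          (by nlinarith [mul_nonneg (sub_nonneg.2 hββ) (sub_nonneg.2 g3)])
          (by nlinarith [mul_nonneg hβ' (sub_nonneg.2 g3), mul_nonneg hβ (sub_nonneg.2 g3)])
        convert this using 1
        ext σ
        ring
      · simp only [Function.updateFinset, hi, hj, Pi.sup_apply, Pi.inf_apply]
        simp only [not_false_eq_true, dif_neg]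
        apply coneK_const
        obtain ⟨g1, g2, g3, g4⟩ := gen i hi
        obtain ⟨k1, k2, k3, k4⟩ := gen j hj
        rw [g4, k4]
        generalize x i ⊓ y i = m at *
        generalize x j ⊓ y j = n at *
        have e1 : 0 ≤ y i * y j - m * n := by nlinarith
        have e2 : 0 ≤ (x i - m) * (y j - n) := mul_nonneg (by linarith) (by linarith)
        have e3 : 0 ≤ (y i - m) * (x j - n) := mul_nonneg (by linarith) (by linarith)
        have e4 : 0 ≤ (β' - β) * (y i * y j - m * n) := mul_nonneg (by linarith) e1
        have e5 := mul_nonneg hβ' (add_nonneg e2 e3)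
        nlinarith
    convert this using 1
    ext σ
    simp only [quadF, Finset.sum_apply, Finset.mul_sum, ← Finset.sum_add_distrib,
      ← Finset.sum_sub_distrib]
    refine Finset.sum_congr rfl fun i _ => Finset.sum_congr rfl fun j _ => ?_
    ring

lemma int_split {ι : Type*} [Fintype ι] [DecidableEq ι] (μ : ι → Measure ℝ)
    [∀ i, SigmaFinite (μ i)] (b : Finset ι) (k w : (ι → ℝ) → ℝ≥0∞) (hk : Measurable k)
    (hw : Measurable w) (hdep : ∀ x y, (∀ i ∈ b, x i = y i) → k x = k y) :
    ∫⁻ x, k x * w x ∂(Measure.pi μ) =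
      lmarginal μ b (fun x => k x * lmarginal μ bᶜ w x) 0 := by
  rw [lintegral_eq_lmarginal_univ (0 : ι → ℝ), ← Finset.union_compl b,
    lmarginal_union μ (fun x => k x * w x) (hk.mul hw) disjoint_compl_right]
  congr 1
  funext x
  have hm : Measurable fun u : (bᶜ : Finset ι) → ℝ => w (Function.updateFinset x bᶜ u) :=
    hw.comp measurable_updateFinset
  unfold lmarginal
  rw [← lintegral_const_mul _ hm]
  refine lintegral_congr fun u => ?_
  show k _ * w _ = _
  congr 1
  refine hdep _ _ fun i hi => ?_
  simp [Function.updateFinset, hi]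

lemma holley_gibbs {ι : Type*} [Fintype ι] [DecidableEq ι] (μ : ι → Measure ℝ)
    [∀ i, SigmaFinite (μ i)] (b : Finset ι) (hμ : ∀ i ∉ b, (μ i).map (fun u => -u) = μ i)
    (hpos : ∀ i ∈ b, ∀ᵐ u ∂(μ i), 0 ≤ u)
    (c : ι → ι → ℝ) (hc : ∀ i j, 0 ≤ c i j) (β β' : ℝ) (hβ : 0 ≤ β) (hββ : β ≤ β')
    (h : (ι → ℝ) → ℝ≥0∞) (hm : Measurable h)
    (hmono : ∀ x y, (∀ i ∈ b, x i ≤ y i) → h x ≤ h y) :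
    (∫⁻ x, h x * wgt c β x ∂(Measure.pi μ)) * (∫⁻ x, wgt c β' x ∂(Measure.pi μ)) ≤
    (∫⁻ x, h x * wgt c β' x ∂(Measure.pi μ)) * (∫⁻ x, wgt c β x ∂(Measure.pi μ)) := by
  let P : Set (ι → ℝ) := {x | ∀ i ∈ b, 0 ≤ x i}
  have hP : MeasurableSet P := by
    have : P = ⋂ i ∈ b, {x | 0 ≤ x i} := by
      ext x
      simp [P]
    rw [this]
    exact Finset.measurableSet_biInter _ fun i _ =>
      measurableSet_le measurable_const (measurable_pi_apply i)
  let I : (ι → ℝ) → ℝ≥0∞ := P.indicator 1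
  have hI : Measurable I := measurable_one.indicator hP
  have hae : ∀ᵐ x ∂(Measure.pi μ), I x = 1 := by
    have : ∀ᵐ x ∂(Measure.pi μ), ∀ i, i ∈ b → 0 ≤ x i := by
      rw [ae_all_iff]
      intro i
      by_cases hi : i ∈ b
      · filter_upwards [Measure.tendsto_eval_ae_ae.eventually (hpos i hi)] with x hx _ using hx
      · exact Filter.Eventually.of_forall fun x h => absurd h hi
    filter_upwards [this] with x hx
    exact Set.indicator_of_mem (s := P) hx _
  have hIdep : ∀ x y : ι → ℝ, (∀ i ∈ b, x i = y i) → I x = I y := by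
    intro x y hxy
    have : x ∈ P ↔ y ∈ P := by
      simp only [P, Set.mem_ofPred_eq]
      exact forall₂_congr fun i hi => by rw [hxy i hi]
    by_cases hx : x ∈ P
    · simp [I, hx, this.1 hx]
    · have hy : y ∉ P := fun h => hx (this.2 h)
      simp [I, hx, hy]
  have hhdep : ∀ x y : ι → ℝ, (∀ i ∈ b, x i = y i) → h x = h y := fun x y hxy =>
    le_antisymm (hmono _ _ fun i hi => (hxy i hi).le) (hmono _ _ fun i hi => (hxy i hi).ge)
  have e1 : ∀ β, ∫⁻ x, wgt c β x ∂(Measure.pi μ) =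
      lmarginal μ b (fun x => I x * lmarginal μ bᶜ (wgt c β) x) 0 := by
    intro β
    rw [← int_split μ b I _ hI (measurable_wgt c β) hIdep]
    refine lintegral_congr_ae ?_
    filter_upwards [hae] with x hx
    rw [hx, one_mul]
  have e2 : ∀ β, ∫⁻ x, h x * wgt c β x ∂(Measure.pi μ) =
      lmarginal μ b (fun x => (h x * I x) * lmarginal μ bᶜ (wgt c β) x) 0 := by
    intro β
    rw [← int_split μ b (fun x => h x * I x) _ (hm.mul hI) (measurable_wgt c β)
      (fun x y hxy => by rw [hIdep x y hxy, hhdep x y hxy])]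
    refine lintegral_congr_ae ?_
    filter_upwards [hae] with x hx
    rw [hx, mul_one]
  have hL : ∀ β, Measurable (lmarginal μ bᶜ (wgt c β)) := fun β =>
    (measurable_wgt c β).lmarginal μ
  have main := four_marg μ (fun x => (h x * I x) * lmarginal μ bᶜ (wgt c β) x)
    (fun x => I x * lmarginal μ bᶜ (wgt c β') x)
    (fun x => (h x * I x) * lmarginal μ bᶜ (wgt c β') x)
    (fun x => I x * lmarginal μ bᶜ (wgt c β) x)
    ((hm.mul hI).mul (hL _)) (hI.mul (hL _)) ((hm.mul hI).mul (hL _)) (hI.mul (hL _)) ?_ b 0 0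
  · simp only [sup_idem, inf_idem] at main
    rw [e1, e1, e2, e2]
    exact main
  · intro x y
    by_cases hx : x ∈ P
    swap
    · simp [I, hx]
    by_cases hy : y ∈ P
    swap
    · simp [I, hy]
    have h1 : x ⊔ y ∈ P := fun i hi => le_sup_of_le_left (hx i hi)
    have h2 : x ⊓ y ∈ P := fun i hi => le_inf (hx i hi) (hy i hi)
    have g := ginibre_marg μ bᶜ (fun i hi => hμ i (by simpa using hi)) c hc β β' hβ hββ y x
      (fun i hi => hy i (by simpa using hi)) (fun i hi => hx i (by simpa using hi))
    rw [sup_comm, inf_comm] at g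
    simp only [I, Set.indicator_of_mem hx, Set.indicator_of_mem hy, Set.indicator_of_mem h1,
      Set.indicator_of_mem h2, Pi.one_apply, one_mul, mul_one]
    calc _ = h x * (lmarginal μ bᶜ (wgt c β') y * lmarginal μ bᶜ (wgt c β) x) := by ring
      _ ≤ h (x ⊔ y) * (lmarginal μ bᶜ (wgt c β') (x ⊔ y) * lmarginal μ bᶜ (wgt c β) (x ⊓ y)) := by
        gcongr
        exact hmono _ _ fun i _ => le_sup_left
      _ = _ := by ring

lemma wgt_finite {ι : Type*} [Fintype ι] [DecidableEq ι] (μ : ι → Measure ℝ)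
    [∀ i, SigmaFinite (μ i)]
    (hfin : ∀ i, ∀ C : ℝ, ∫⁻ u, ENNReal.ofReal (Real.exp (C * u ^ 2)) ∂(μ i) < ⊤)
    (c : ι → ι → ℝ) (hc : ∀ i j, 0 ≤ c i j) (β : ℝ) (hβ : 0 ≤ β) :
    ∫⁻ x, wgt c β x ∂(Measure.pi μ) < ⊤ := by
  set M := ∑ i, ∑ j, c i j with hM
  have hb : ∀ x, wgt c β x ≤ ∏ k, ENNReal.ofReal (Real.exp ((β * M) * x k ^ 2)) := by
    intro x
    rw [← ENNReal.ofReal_prod_of_nonneg (fun _ _ => (Real.exp_pos _).le), ← Real.exp_sum,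
      ← Finset.mul_sum]
    refine ENNReal.ofReal_le_ofReal (Real.exp_le_exp.2 ?_)
    rw [mul_assoc]
    refine mul_le_mul_of_nonneg_left ?_ hβ
    rw [hM, Finset.sum_mul]
    refine Finset.sum_le_sum fun i _ => ?_
    rw [Finset.sum_mul]
    refine Finset.sum_le_sum fun j _ => mul_le_mul_of_nonneg_left ?_ (hc i j)
    have h1 : ∀ i, x i ^ 2 ≤ ∑ k, x k ^ 2 := fun i =>
      Finset.single_le_sum (f := fun k => x k ^ 2) (fun k _ => sq_nonneg _) (Finset.mem_univ i)
    nlinarith [h1 i, h1 j, sq_nonneg (x i - x j)]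
  refine (lintegral_mono hb).trans_lt ?_
  simp_rw [← ENNReal.ofReal_prod_of_nonneg (fun _ _ => (Real.exp_pos _).le)]
  refine Integrable.lintegral_lt_top ?_
  refine Integrable.fintype_prod (f := fun _ u => Real.exp (β * M * u ^ 2)) fun i => ?_
  refine (lintegral_ofReal_ne_top_iff_integrable (by fun_prop)
    (Filter.Eventually.of_forall fun _ => (Real.exp_pos _).le)).1 (hfin i _).ne

lemma rho_all (ρ : Measure ℝ)
    (hρ : ∀ a : ℝ, 0 < a → ∫⁻ u, ENNReal.ofReal (Real.exp (a * u ^ 2)) ∂ρ < ⊤) (C : ℝ) :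
    ∫⁻ u, ENNReal.ofReal (Real.exp (C * u ^ 2)) ∂ρ < ⊤ := by
  refine lt_of_le_of_lt (lintegral_mono fun u => ?_) (hρ (|C| + 1) (by positivity))
  refine ENNReal.ofReal_le_ofReal (Real.exp_le_exp.2 ?_)
  have := le_abs_self C
  nlinarith [sq_nonneg u]

lemma fin_of_all (ρ : Measure ℝ)
    (hρ : ∀ C : ℝ, ∫⁻ u, ENNReal.ofReal (Real.exp (C * u ^ 2)) ∂ρ < ⊤) :
    IsFiniteMeasure ρ := ⟨by simpa using hρ 0⟩

lemma zeta_all (ρ : Measure ℝ) (a B : ℝ)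
    (hρ : ∀ C : ℝ, ∫⁻ u, ENNReal.ofReal (Real.exp (C * u ^ 2)) ∂ρ < ⊤) (C : ℝ) :
    ∫⁻ u, ENNReal.ofReal (Real.exp (C * u ^ 2)) ∂(zetaM ρ a B) < ⊤ := by
  refine (lintegral_mono' Measure.restrict_le_self le_rfl).trans_lt ?_
  rw [lintegral_map (by fun_prop) (by fun_prop), rhoMod,
    lintegral_withDensity_eq_lintegral_mul _ (by fun_prop) (by fun_prop)]
  have : ∀ u : ℝ, ((fun u => ENNReal.ofReal (Real.exp (a * u ^ 2))) *
      fun u => ENNReal.ofReal (Real.exp (C * (u + B) ^ 2))) u ≤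
      ENNReal.ofReal (Real.exp (2 * |C| * B ^ 2)) *
        ENNReal.ofReal (Real.exp ((a + 2 * |C|) * u ^ 2)) := by
    intro u
    simp only [Pi.mul_apply]
    rw [← ENNReal.ofReal_mul (Real.exp_pos _).le, ← ENNReal.ofReal_mul (Real.exp_pos _).le,
      ← Real.exp_add, ← Real.exp_add]
    refine ENNReal.ofReal_le_ofReal (Real.exp_le_exp.2 ?_)
    have h1 : C * (u + B) ^ 2 ≤ |C| * (u + B) ^ 2 :=
      mul_le_mul_of_nonneg_right (le_abs_self C) (sq_nonneg _)
    have h2 : |C| * (u + B) ^ 2 ≤ |C| * (2 * u ^ 2 + 2 * B ^ 2) :=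
      mul_le_mul_of_nonneg_left (by nlinarith [sq_nonneg (u - B)]) (abs_nonneg C)
    nlinarith
  refine (lintegral_mono this).trans_lt ?_
  rw [lintegral_const_mul _ (by fun_prop)]
  exact ENNReal.mul_lt_top ENNReal.ofReal_lt_top (hρ _)

lemma zeta_pos (ρ : Measure ℝ) (a B : ℝ) (hB : 0 < B) : ∀ᵐ u ∂(zetaM ρ a B), 0 ≤ u := by
  unfold zetaM
  filter_upwards [ae_restrict_mem measurableSet_Ici] with u hu
  exact hB.le.trans hu

lemma hamil_eq {V : Type*} (G : SimpleGraph V) (β : ℝ) (Λ : Finset V) (φ : ↥Λ → ℝ) :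
    hamil (Jnn G) β Λ 0 φ =
      β * quadF (fun x y : ↥Λ => if x.1 ≠ y.1 then (1 / 2) * Jnn G x.1 y.1 else 0) φ := by
  unfold hamil quadF
  simp only [Pi.zero_apply, mul_zero, tsum_zero, Finset.sum_const_zero, add_zero, Finset.mul_sum]
  refine Finset.sum_congr rfl fun x _ => Finset.sum_congr rfl fun y _ => ?_
  split_ifs <;> ring

lemma dom_final {Ω : Type*} [MeasurableSpace Ω] (π : Measure Ω) (w w' : Ω → ℝ≥0∞)
    (hw : Measurable w) (hw' : Measurable w') (hw0 : ∀ x, w x ≠ 0) (hw0' : ∀ x, w' x ≠ 0)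
    (hf : ∫⁻ x, w x ∂π < ⊤) (hf' : ∫⁻ x, w' x ∂π < ⊤)
    (g : Ω → ℝ) (hg : Measurable g) (K : ℝ) (hK : ∀ x, |g x| ≤ K)
    (H : (∫⁻ x, ENNReal.ofReal (g x + K) * w x ∂π) * (∫⁻ x, w' x ∂π) ≤
      (∫⁻ x, ENNReal.ofReal (g x + K) * w' x ∂π) * (∫⁻ x, w x ∂π)) :
    ∫ x, g x ∂((π.withDensity w Set.univ)⁻¹ • π.withDensity w) ≤
    ∫ x, g x ∂((π.withDensity w' Set.univ)⁻¹ • π.withDensity w') := by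
  by_cases hπ : π = 0
  · subst hπ
    simp
  have hZ : π.withDensity w Set.univ = ∫⁻ x, w x ∂π := by simp
  have hZ' : π.withDensity w' Set.univ = ∫⁻ x, w' x ∂π := by simp
  have pos : ∀ w : Ω → ℝ≥0∞, Measurable w → (∀ x, w x ≠ 0) → ∫⁻ x, w x ∂π ≠ 0 := by
    intro w hw h0 h
    rw [lintegral_eq_zero_iff hw] at h
    apply hπ
    rw [← ae_eq_bot, ← Filter.eventually_false_iff_eq_bot]
    filter_upwards [h] with x hx using h0 x hx
  have p := pos w hw hw0
  have p' := pos w' hw' hw0'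
  rw [hZ, hZ']
  set Z := ∫⁻ x, w x ∂π
  set Z' := ∫⁻ x, w' x ∂π
  have prob : ∀ w : Ω → ℝ≥0∞, ∫⁻ x, w x ∂π ≠ 0 → ∫⁻ x, w x ∂π < ⊤ →
      IsProbabilityMeasure ((∫⁻ x, w x ∂π)⁻¹ • π.withDensity w) := by
    intro w h0 h1
    constructor
    simp [ENNReal.inv_mul_cancel h0 h1.ne]
  have P1 := prob w p hf
  have P2 := prob w' p' hf'
  have hint : ∀ P : Measure Ω, IsProbabilityMeasure P →
      ∫ x, g x ∂P = (∫⁻ x, ENNReal.ofReal (g x + K) ∂P).toReal - K ∧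
      ∫⁻ x, ENNReal.ofReal (g x + K) ∂P ≠ ⊤ := by
    intro P hP
    have hi : Integrable g P := Integrable.of_bound hg.aestronglyMeasurable K
      (Filter.Eventually.of_forall hK)
    have hi2 : Integrable (fun x => g x + K) P := hi.add (integrable_const K)
    refine ⟨?_, hi2.lintegral_lt_top.ne⟩
    rw [← integral_eq_lintegral_of_nonneg_ae
      (Filter.Eventually.of_forall fun x => by
        have := neg_le_of_abs_le (hK x)
        simp only [Pi.zero_apply]
        linarith) hi2.aestronglyMeasurable,
      integral_add hi (integrable_const K)]
    simp
  rw [(hint _ P1).1, (hint _ P2).1]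
  refine sub_le_sub_right (ENNReal.toReal_mono (hint _ P2).2 ?_) _
  have hgm : Measurable fun x => ENNReal.ofReal (g x + K) := by fun_prop
  rw [lintegral_smul_measure, lintegral_smul_measure,
    lintegral_withDensity_eq_lintegral_mul _ hw hgm,
    lintegral_withDensity_eq_lintegral_mul _ hw' hgm]
  simp only [Pi.mul_apply, smul_eq_mul, mul_comm (w _), mul_comm (w' _)]
  set A := ∫⁻ x, ENNReal.ofReal (g x + K) * w x ∂π
  set A' := ∫⁻ x, ENNReal.ofReal (g x + K) * w' x ∂π
  calc Z⁻¹ * A = Z⁻¹ * Z'⁻¹ * (A * Z') := by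
        rw [show Z⁻¹ * Z'⁻¹ * (A * Z') = Z⁻¹ * A * (Z'⁻¹ * Z') by ring,
          ENNReal.inv_mul_cancel p' hf'.ne, mul_one]
    _ ≤ Z⁻¹ * Z'⁻¹ * (A' * Z) := by gcongr
    _ = Z'⁻¹ * A' := by
        rw [show Z⁻¹ * Z'⁻¹ * (A' * Z) = Z'⁻¹ * A' * (Z⁻¹ * Z) by ring,
          ENNReal.inv_mul_cancel p hf.ne, mul_one]

/-- Lemma `Lemma: beta monotonicity`: monotonicity in `β` of the
boundary-layer marginal. Let `G` be a connected graph of degree at most `D`, `ρ` an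
even measure with all Gaussian moments, `Λ` a finite set, and let `ρ̃` equal `ζ_{a,B}`
on `∂Λ` and `ρ` on `Λ ∖ ∂Λ` (for arbitrary fixed `a, B > 0`). Then for `β' ≥ β ≥ 0`,
the `∂Λ`-marginal of `ν^0_{Λ,β,ρ̃}` is stochastically dominated by the `∂Λ`-marginal
of `ν^0_{Λ,β',ρ̃}`. -/
theorem stmt19 {V : Type*} [Countable V] (G : SimpleGraph V) (hconn : G.Connected)
    [∀ x : V, Fintype (G.neighborSet x)] (D : ℕ) (hD : 0 < D)
    (hdeg : ∀ x : V, G.degree x ≤ D)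
    (ρ : Measure ℝ) (hρeven : ρ.map (fun u => -u) = ρ)
    (hρ : ∀ a : ℝ, 0 < a →
      0 < ∫⁻ u, ENNReal.ofReal (Real.exp (a * u ^ 2)) ∂ρ ∧
      ∫⁻ u, ENNReal.ofReal (Real.exp (a * u ^ 2)) ∂ρ < ⊤)
    (a B : ℝ) (ha : 0 < a) (hB : 0 < B)
    (Λ : Finset V) (β β' : ℝ) (hβ : 0 ≤ β) (hββ' : β ≤ β') :
    StochDom
      (marg (show bdry G Λ ⊆ Λ from Finset.filter_subset _ _) (gibbsV (Jnn G) β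
        (fun x => if x ∈ bdry G Λ then zetaM ρ a B else ρ) Λ 0))
      (marg (show bdry G Λ ⊆ Λ from Finset.filter_subset _ _) (gibbsV (Jnn G) β'
        (fun x => if x ∈ bdry G Λ then zetaM ρ a B else ρ) Λ 0)) := by
  have hall := rho_all ρ fun a ha => (hρ a ha).2
  have hzall := zeta_all ρ a B hall
  have f1 := fin_of_all ρ hall
  have f2 := fin_of_all _ hzall
  intro g hg hmono hK
  obtain ⟨K, hK⟩ := hK
  have hsub : bdry G Λ ⊆ Λ := Finset.filter_subset _ _
  have hr : Measurable fun (φ : ↥Λ → ℝ) (x : ↥(bdry G Λ)) => φ ⟨x.1, hsub x.2⟩ := by fun_prop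
  unfold marg
  rw [integral_map hr.aemeasurable hg.aestronglyMeasurable,
    integral_map hr.aemeasurable hg.aestronglyMeasurable]
  unfold gibbsV
  set μ : ↥Λ → Measure ℝ := fun x => if x.1 ∈ bdry G Λ then zetaM ρ a B else ρ with hμ
  have hsf : ∀ i, SigmaFinite (μ i) := by
    intro i
    simp only [hμ]
    split_ifs <;> infer_instance
  set c : ↥Λ → ↥Λ → ℝ := fun x y => if x.1 ≠ y.1 then (1 / 2) * Jnn G x.1 y.1 else 0 with hcdef
  have hc : ∀ i j, 0 ≤ c i j := by
    intro i j
    simp only [hcdef, Jnn]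
    split_ifs <;> norm_num
  have hw : ∀ β, (fun φ : ↥Λ → ℝ => ENNReal.ofReal (Real.exp (hamil (Jnn G) β Λ 0 φ))) =
      wgt c β := by
    intro β
    funext φ
    rw [hamil_eq]
    rfl
  rw [hw, hw]
  have hfin : ∀ i, ∀ C : ℝ, ∫⁻ u, ENNReal.ofReal (Real.exp (C * u ^ 2)) ∂(μ i) < ⊤ := by
    intro i C
    simp only [hμ]
    split_ifs
    · exact hzall C
    · exact hall C
  have h0 : ∀ β x, wgt c β x ≠ 0 := fun β x => by
    simp [wgt, Real.exp_pos]
  refine dom_final (Measure.pi μ) (wgt c β) (wgt c β') (measurable_wgt _ _) (measurable_wgt _ _)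
    (h0 _) (h0 _) (wgt_finite μ hfin c hc β hβ) (wgt_finite μ hfin c hc β' (hβ.trans hββ'))
    (fun φ => g fun x => φ ⟨x.1, hsub x.2⟩) (hg.comp hr) K (fun _ => hK _) ?_
  refine holley_gibbs μ (Finset.univ.filter fun i : ↥Λ => i.1 ∈ bdry G Λ) ?_ ?_ c hc β β' hβ hββ'
    _ ?_ ?_
  · intro i hi
    have : i.1 ∉ bdry G Λ := by simpa using hi
    simp only [hμ, this, if_false]
    exact hρeven
  · intro i hi
    have : i.1 ∈ bdry G Λ := by simpa using hi
    simp only [hμ, this, if_true]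
    exact zeta_pos ρ a B hB
  · have := hg.comp hr
    exact (this.add_const K).ennreal_ofReal
  · intro x y hxy
    refine ENNReal.ofReal_le_ofReal (add_le_add_left (hmono fun i => hxy _ ?_) K)
    simp
end
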